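/- arXiv:1701.07326 — 13 statements merged into one kernel-verified Lean document; each statement's English description precedes it below -/
import Mathlib

section
/- Let d ≥ 2 be an integer and let a1, a2, b1, b2, c1, c2 ≥ 1 be integers with a1 + a2 = b1 + b2 = c1 + c2 = d and 2a1 > d, 2b1 > d, 2c1 > d. Set α = a1 + b1 − d, β = a1 + c1 − d, ν = b1 + c1 − d and λ = a1·b1 + a2·c2 − b1·c2. Then α + β + ν ≤ 2λ. -/
/-!
With `α = a1 + b1 - d`, the relations `a1 + a2 = b1 + b2 = c1 + c2 = d` turn `λ` into
`α * c1 + a2 * b2`, while `α + β + ν + d = 2 * (α + c1)`. As `α` and `c1` are at least `1`,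
`α + c1 ≤ α * c1 + 1 ≤ α * c1 + a2 * b2 = λ`.
-/

theorem add_le_mul_add_one_of_one_le {R : Type*} [Ring R] [PartialOrder R] [IsOrderedRing R]
    {x y : R} (hx : 1 ≤ x) (hy : 1 ≤ y) : x + y ≤ x * y + 1 := by
  simpa only [one_mul, mul_one, add_comm] using mul_add_mul_le_mul_add_mul hx hy

section CommRing

variable {R : Type*} [CommRing R] {d a1 a2 b1 b2 c1 c2 : R}

theorem lambda_eq_alpha_mul_add (hsa : a1 + a2 = d) (hsb : b1 + b2 = d) (hsc : c1 + c2 = d) :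
    a1 * b1 + a2 * c2 - b1 * c2 = (a1 + b1 - d) * c1 + a2 * b2 := by
  obtain rfl : a2 = d - a1 := eq_sub_of_add_eq' hsa
  obtain rfl : b2 = d - b1 := eq_sub_of_add_eq' hsb
  obtain rfl : c2 = d - c1 := eq_sub_of_add_eq' hsc
  ring

theorem stmt_1_general [PartialOrder R] [IsOrderedRing R]
    (ha2 : 1 ≤ a2) (hb2 : 1 ≤ b2) (hc1 : 1 ≤ c1)
    (hsa : a1 + a2 = d) (hsb : b1 + b2 = d) (hsc : c1 + c2 = d) (hα : 1 ≤ a1 + b1 - d) :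
    (a1 + b1 - d) + (a1 + c1 - d) + (b1 + c1 - d) + d
      ≤ 2 * (a1 * b1 + a2 * c2 - b1 * c2) := by
  have sum_le_lambda : (a1 + b1 - d) + c1 ≤ a1 * b1 + a2 * c2 - b1 * c2 :=
    calc
      (a1 + b1 - d) + c1 ≤ (a1 + b1 - d) * c1 + 1 := add_le_mul_add_one_of_one_le hα hc1
      _ ≤ (a1 + b1 - d) * c1 + a2 * b2 := by
        gcongr
        exact one_le_mul_of_one_le_of_one_le ha2 hb2
      _ = a1 * b1 + a2 * c2 - b1 * c2 := (lambda_eq_alpha_mul_add hsa hsb hsc).symm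
  calc
    (a1 + b1 - d) + (a1 + c1 - d) + (b1 + c1 - d) + d = 2 * ((a1 + b1 - d) + c1) := by ring
    _ ≤ 2 * (a1 * b1 + a2 * c2 - b1 * c2) := mul_le_mul_of_nonneg_left sum_le_lambda zero_le_two

end CommRing

/-- Lemma 2.6(2), Type I: for a regular trinomial h = x^{a1}y^{a2} + y^{b1}z^{b2} + z^{c1}x^{c2}
of degree d, the invariants satisfy α + β + ν ≤ 2λ. -/
theorem stmt_1 (d a1 a2 b1 b2 c1 c2 : ℤ) (hd : 2 ≤ d)
    (ha1 : 1 ≤ a1) (ha2 : 1 ≤ a2) (hb1 : 1 ≤ b1) (hb2 : 1 ≤ b2) (hc1 : 1 ≤ c1) (hc2 : 1 ≤ c2)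
    (hsa : a1 + a2 = d) (hsb : b1 + b2 = d) (hsc : c1 + c2 = d)
    (h2a : 2 * a1 > d) (h2b : 2 * b1 > d) (h2c : 2 * c1 > d) :
    (a1 + b1 - d) + (a1 + c1 - d) + (b1 + c1 - d) ≤ 2 * (a1 * b1 + a2 * c2 - b1 * c2) := by
  have hα : 1 ≤ a1 + b1 - d := by omega
  linarith [stmt_1_general ha2 hb2 hc1 hsa hsb hsc hα]
end

section
/- Let d ≥ 2 be an integer and let a1, a3, b ≥ 0 and a2, c ≥ 1 be integers with a1 + a2 + a3 = d, b + c = d, 2a2 > d and 2c > d. Set α = a2, β = c, ν = a2 + c − d and λ = a2·c − a3·b. Then α + β + ν ≤ 2λ. -/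
/-!
With `ν = a2 + c - d`, homogeneity of the trinomial gives `λ = d * ν + a1 * b ≥ d * ν`, while
`α + β + ν = d + 2 * ν`. Regularity makes `ν` positive, and `d + 2 * ν ≤ 2 * (d * ν)` whenever
`2 ≤ d` and `1 ≤ ν`, because `2 * (d * ν) - (d + 2 * ν) = 2 * (d - 1) * (ν - 1) + (d - 2)`.
-/

section Homogeneous

variable {R : Type*} [CommRing R] {d a1 a2 a3 b c : R}

theorem mul_sub_mul_eq_of_sum_eq (hsa : a1 + a2 + a3 = d) (hsb : b + c = d) :
    a2 * c - a3 * b = d * (a2 + c - d) + a1 * b := by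
  obtain rfl : a3 = d - a1 - a2 := by rw [← hsa]; ring
  obtain rfl : c = d - b := by rw [← hsb]; ring
  ring

variable [PartialOrder R] [IsOrderedRing R]

theorem add_two_mul_le_two_mul_mul {n : R} (hd : 2 ≤ d) (hn : 1 ≤ n) :
    d + 2 * n ≤ 2 * (d * n) := by
  have hd_one : 1 ≤ d := one_le_two.trans hd
  have h_prod : 0 ≤ (d - 1) * (n - 1) := mul_nonneg (sub_nonneg.2 hd_one) (sub_nonneg.2 hn)
  calc
    d + 2 * n ≤ d + 2 * n + (2 * ((d - 1) * (n - 1)) + (d - 2)) :=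
      le_add_of_nonneg_right (add_nonneg (mul_nonneg zero_le_two h_prod) (sub_nonneg.2 hd))
    _ = 2 * (d * n) := by ring

theorem stmt_2_general (hd : 2 ≤ d) (ha1 : 0 ≤ a1) (hb : 0 ≤ b)
    (hsa : a1 + a2 + a3 = d) (hsb : b + c = d) (hν : 1 ≤ a2 + c - d) :
    a2 + c + (a2 + c - d) ≤ 2 * (a2 * c - a3 * b) := by
  calc
    a2 + c + (a2 + c - d) = d + 2 * (a2 + c - d) := by ring
    _ ≤ 2 * (d * (a2 + c - d)) := add_two_mul_le_two_mul_mul hd hν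
    _ ≤ 2 * (d * (a2 + c - d) + a1 * b) :=
      mul_le_mul_of_nonneg_left (le_add_of_nonneg_right (mul_nonneg ha1 hb)) zero_le_two
    _ = 2 * (a2 * c - a3 * b) := by rw [mul_sub_mul_eq_of_sum_eq hsa hsb]

end Homogeneous

/-- Lemma 2.6(2), Type II: for a regular trinomial h = x^d + x^{a1}y^{a2}z^{a3} + y^b z^c
of degree d, the invariants α = a2, β = c, ν = a2 + c − d, λ = a2·c − a3·b satisfy
α + β + ν ≤ 2λ. -/
theorem stmt_2 (d a1 a2 a3 b c : ℤ) (hd : 2 ≤ d)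
    (ha1 : 0 ≤ a1) (ha3 : 0 ≤ a3) (hb : 0 ≤ b) (ha2 : 1 ≤ a2) (hc : 1 ≤ c)
    (hsa : a1 + a2 + a3 = d) (hsb : b + c = d)
    (h2a : 2 * a2 > d) (h2c : 2 * c > d) :
    a2 + c + (a2 + c - d) ≤ 2 * (a2 * c - a3 * b) :=
  stmt_2_general hd ha1 hb hsa hsb (by lia)
end

section
/- Let α, β, ν, λ be positive integers satisfying the strict triangle inequalities α < β + ν, β < α + ν, ν < α + β and the inequality α + β + ν ≤ 2λ (as hold for the invariants of any regular trinomial). Let n ≥ 1, l ≥ n and s ≥ 1 be integers. Then there is no triple (u1, u2, u3) ∈ ℤ³ with u1 + u2 + u3 odd such that |αn/(l^s·λ) − u1| + |βn/(l^s·λ) − u2| + |νn/(l^s·λ) − u3| < 1. -/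
/-!
The triangle inequalities together with `x + y + z ≤ 2` cut out a tetrahedron whose facets are
`ε₁ x + ε₂ y + ε₃ z ≤ c` with signs `εᵢ = ±1` and `c ∈ {0, 2}`. Its only lattice points are its
vertices, whose coordinate sums are even, so it contains no point of `L_odd`. Since `c` is even
while `ε₁ u₁ + ε₂ u₂ + ε₃ u₃` is odd, a point of `L_odd` violates one of these inequalities by at
least `1`. A functional with coefficients `±1` is bounded by the taxicab norm,
so the taxicab distance from such a point to the tetrahedron is at least `1`.
The point `l⁻ˢ · t · n` lies in the tetrahedron because `0 ≤ n / lˢ ≤ 1`.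
-/

/-- Membership of `(x, y, z)` in the closed tetrahedron with vertices `(0, 0, 0)`, `(r, r, 0)`,
`(r, 0, r)` and `(0, r, r)`, encoded by its four facet inequalities. For `r = 1` the vertices are
those of the unit cube with even coordinate sum. -/
structure InEvenTetrahedron {R : Type*} [Semiring R] [LE R] (r x y z : R) : Prop where
  fst_le : x ≤ y + z
  snd_le : y ≤ x + z
  thd_le : z ≤ x + y
  sum_le : x + y + z ≤ 2 * r

theorem facet_violated_by_one_of_odd_sum {u v w : ℤ} (hodd : Odd (u + v + w)) :
    v + w + 1 ≤ u ∨ u + w + 1 ≤ v ∨ u + v + 1 ≤ w ∨ 3 ≤ u + v + w := by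
  obtain ⟨k, hk⟩ := hodd
  omega

namespace InEvenTetrahedron

variable {R : Type*} [CommRing R] [LinearOrder R] [IsStrictOrderedRing R] {r r' c x y z : R}

theorem mono (h : InEvenTetrahedron r x y z) (hr : r ≤ r') : InEvenTetrahedron r' x y z where
  __ := h
  sum_le := h.sum_le.trans (by gcongr)

theorem mul_right (h : InEvenTetrahedron r x y z) (hc : 0 ≤ c) :
    InEvenTetrahedron (r * c) (x * c) (y * c) (z * c) where
  fst_le := by simpa only [add_mul] using mul_le_mul_of_nonneg_right h.fst_le hc
  snd_le := by simpa only [add_mul] using mul_le_mul_of_nonneg_right h.snd_le hc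
  thd_le := by simpa only [add_mul] using mul_le_mul_of_nonneg_right h.thd_le hc
  sum_le := by simpa only [add_mul, mul_assoc] using mul_le_mul_of_nonneg_right h.sum_le hc

theorem one_le_taxicab_of_odd_sum (h : InEvenTetrahedron 1 x y z) {u v w : ℤ}
    (hodd : Odd (u + v + w)) : 1 ≤ |x - u| + |y - v| + |z - w| := by
  obtain ⟨hx, hx'⟩ := abs_le.mp (le_refl |x - u|)
  obtain ⟨hy, hy'⟩ := abs_le.mp (le_refl |y - v|)
  obtain ⟨hz, hz'⟩ := abs_le.mp (le_refl |z - w|)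
  rcases facet_violated_by_one_of_odd_sum hodd with hfst | hsnd | hthd | hsum
  · have : (v + w + 1 : R) ≤ u := mod_cast hfst
    linarith [h.fst_le]
  · have : (u + w + 1 : R) ≤ v := mod_cast hsnd
    linarith [h.snd_le]
  · have : (u + v + 1 : R) ≤ w := mod_cast hthd
    linarith [h.thd_le]
  · have : (3 : R) ≤ u + v + w := mod_cast hsum
    linarith [h.sum_le]

end InEvenTetrahedron

theorem stmt_3_general {K : Type*} [Field K] [LinearOrder K] [IsStrictOrderedRing K]
    {α β ν lam n q : K} (hlam : 0 < lam)
    (t1 : α ≤ β + ν) (t2 : β ≤ α + ν) (t3 : ν ≤ α + β) (hsum : α + β + ν ≤ 2 * lam)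
    (hn : 0 ≤ n) (hq : 0 < q) (hnq : n ≤ q) {u1 u2 u3 : ℤ} (hodd : Odd (u1 + u2 + u3)) :
    1 ≤ |α * n / (q * lam) - u1| + |β * n / (q * lam) - u2| + |ν * n / (q * lam) - u3| := by
  have hmem : InEvenTetrahedron lam α β ν := ⟨t1, t2, t3, hsum⟩
  have hscale_nonneg : 0 ≤ n / (q * lam) := by positivity
  have hscale_le : lam * (n / (q * lam)) ≤ 1 :=
    calc lam * (n / (q * lam)) = n / q := by field_simp
      _ ≤ 1 := div_le_one_of_le₀ hnq hq.le
  simpa only [mul_div_assoc] using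
    ((hmem.mul_right hscale_nonneg).mono hscale_le).one_le_taxicab_of_odd_sum hodd

/-- Lemma 2.6(3): for invariants (α, β, ν, λ) satisfying the strict triangle inequalities and
α + β + ν ≤ 2λ, the inequality Td(l^{−s}·t·n, u) < 1 has no solution u ∈ L_odd
for s ≥ 1 and l ≥ n. -/
theorem stmt_3 (α β ν lam n l : ℤ) (s : ℕ)
    (hα : 0 < α) (hβ : 0 < β) (hν : 0 < ν) (hlam : 0 < lam)
    (t1 : α < β + ν) (t2 : β < α + ν) (t3 : ν < α + β)
    (hsum : α + β + ν ≤ 2 * lam)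
    (hn : 1 ≤ n) (hl : n ≤ l) (hs : 1 ≤ s) :
    ¬ ∃ u1 u2 u3 : ℤ, Odd (u1 + u2 + u3) ∧
      |(α * n : ℝ) / ((l : ℝ) ^ s * (lam : ℝ)) - (u1 : ℝ)| +
      |(β * n : ℝ) / ((l : ℝ) ^ s * (lam : ℝ)) - (u2 : ℝ)| +
      |(ν * n : ℝ) / ((l : ℝ) ^ s * (lam : ℝ)) - (u3 : ℝ)| < 1 := by
  rintro ⟨u1, u2, u3, hodd, hdist⟩
  have hnpow : n ≤ l ^ s := hl.trans (le_self_pow₀ (hn.trans hl) (Nat.one_le_iff_ne_zero.mp hs))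
  have hpow : 0 < l ^ s := by omega
  exact hdist.not_ge <| stmt_3_general (mod_cast hlam) (mod_cast t1.le) (mod_cast t2.le)
    (mod_cast t3.le) (mod_cast hsum) (mod_cast zero_le_one.trans hn) (mod_cast hpow)
    (mod_cast hnpow) hodd
end

section
/- Let λ_h, α1, β1, ν1, l, n be positive integers, let s ≥ 0 be an integer, and let δ = (δ1, δ2, δ3) be one of (1,1,1), (1,0,0), (0,1,0), (0,0,1). Let (w1, w2, w3) be the unique integer triple with 0 ≤ w1, w2, w3 < 2λ_h, w1 ≡ l^s·α1·n − δ1·λ_h (mod 2λ_h), w2 ≡ l^s·β1·n − δ2·λ_h (mod 2λ_h), w3 ≡ l^s·ν1·n − δ3·λ_h (mod 2λ_h). Then the following are equivalent: (a) there exists (i, j, k) ∈ {0,1}³ with 2λ_h·(i + j + k) + (−1)^i·w1 + (−1)^j·w2 + (−1)^k·w3 < λ_h; (b) there exist integers v1, v2, v3 such that |l^s·α1·n/λ_h − (2v1 + δ1)| + |l^s·β1·n/λ_h − (2v2 + δ2)| + |l^s·ν1·n/λ_h − (2v3 + δ3)| < 1. -/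
/-!
The distances from a point `y` to the integers have minimum `min (fract y) (1 - fract y)`. Since
`x / lam - (2 * v + δ) = 2 * ((x - δ * lam) / (2 * lam) - v)`, each summand in condition (b) has
minimum `min w (2 * lam - w) / lam` over `v`, where `w` is the residue of `x - δ * lam` modulo
`2 * lam`. The numerator `min w (2 * lam - w)` is also the minimum over `i ∈ {0, 1}` of
`2 * lam * i + (-1) ^ i * w`, so both conditions say that the sum of the three numerators is less
than `lam`.
-/

open Set

theorem exists_add_add_lt_iff_of_isLeast {M : Type*} [Add M] [Preorder M] [AddLeftMono M]
    [AddRightMono M] {A B C : Set M} {a b c r : M}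
    (ha : IsLeast A a) (hb : IsLeast B b) (hc : IsLeast C c) :
    (∃ x ∈ A, ∃ y ∈ B, ∃ z ∈ C, x + y + z < r) ↔ a + b + c < r := by
  constructor
  · rintro ⟨x, hx, y, hy, z, hz, hlt⟩
    exact (add_le_add (add_le_add (ha.2 hx) (hb.2 hy)) (hc.2 hz)).trans_lt hlt
  · exact fun hlt => ⟨a, ha.1, b, hb.1, c, hc.1, hlt⟩

theorem isLeast_image_mul_add_neg_one_pow_mul {R : Type*} [Ring R] [LinearOrder R] (p w : R) :
    IsLeast ((fun i : ℕ => p * i + (-1) ^ i * w) '' Iic 1) (min w (p - w)) := by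
  have hIic : Iic 1 = ({0, 1} : Set ℕ) := by
    ext i
    simp only [mem_Iic, mem_insert_iff, mem_singleton_iff]
    lia
  simpa [hIic, image_pair, sub_eq_add_neg] using isLeast_pair (a := w) (b := p - w)

section Field

variable {K : Type*} [Field K] [LinearOrder K] [IsStrictOrderedRing K] [FloorRing K]

theorem isLeast_range_abs_sub_intCast (y : K) :
    IsLeast (range fun m : ℤ => |y - m|) (min (Int.fract y) (1 - Int.fract y)) := by
  rw [← abs_sub_round_eq_min]
  exact ⟨mem_range_self (round y), forall_mem_range.2 (round_le y)⟩

theorem fract_div_eq_div_of_modEq {p w z : K} (hw : w ∈ Ico 0 p) (hwz : w ≡ z [PMOD p]) :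
    Int.fract (z / p) = w / p := by
  have hp : 0 < p := hw.1.trans_lt hw.2
  have hmod : toIcoMod hp 0 z = w :=
    ((toIcoMod_inj hp).2 hwz).symm.trans ((toIcoMod_eq_self hp).2 (by simpa using hw))
  rw [← hmod, toIcoMod_eq_fract_mul, mul_div_cancel_right₀ _ hp.ne']

theorem isLeast_range_abs_div_sub_two_mul_add {lam w x δ : K} (hw : w ∈ Ico 0 (2 * lam))
    (hwx : w ≡ x - δ * lam [PMOD 2 * lam]) :
    IsLeast (range fun v : ℤ => |x / lam - (2 * v + δ)|) (min w (2 * lam - w) / lam) := by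
  have hlam : 0 < lam := pos_of_mul_pos_right (hw.1.trans_lt hw.2) zero_le_two
  have hterm (v : ℤ) :
      |x / lam - (2 * v + δ)| = 2 * |(x - δ * lam) / (2 * lam) - v| :=
    calc
      |x / lam - (2 * v + δ)| = |2 * ((x - δ * lam) / (2 * lam) - v)| := by
        congr 1
        field_simp
        ring
      _ = 2 * |(x - δ * lam) / (2 * lam) - v| := by rw [abs_mul, abs_two]
  have hmin : min w (2 * lam - w) / lam =
      2 * min (w / (2 * lam)) (1 - w / (2 * lam)) := by
    rw [mul_min_of_nonneg _ _ zero_le_two, ← min_div_div_right hlam.le]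
    congr 1 <;> field_simp
  have hdist := isLeast_range_abs_sub_intCast ((x - δ * lam) / (2 * lam))
  rw [fract_div_eq_div_of_modEq hw hwx] at hdist
  simpa only [hterm, hmin, ← range_comp, Function.comp_def] using
    (monotone_mul_left_of_nonneg (zero_le_two (α := K))).map_isLeast hdist

theorem stmt_5_general {lam x1 x2 x3 δ1 δ2 δ3 w1 w2 w3 : K}
    (hw1 : w1 ∈ Ico 0 (2 * lam)) (hwx1 : w1 ≡ x1 - δ1 * lam [PMOD 2 * lam])
    (hw2 : w2 ∈ Ico 0 (2 * lam)) (hwx2 : w2 ≡ x2 - δ2 * lam [PMOD 2 * lam])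
    (hw3 : w3 ∈ Ico 0 (2 * lam)) (hwx3 : w3 ≡ x3 - δ3 * lam [PMOD 2 * lam]) :
    (∃ i j k : ℕ, i ≤ 1 ∧ j ≤ 1 ∧ k ≤ 1 ∧
        2 * lam * (i + j + k) + (-1) ^ i * w1 + (-1) ^ j * w2 + (-1) ^ k * w3 < lam) ↔
    ∃ v1 v2 v3 : ℤ, |x1 / lam - (2 * v1 + δ1)| + |x2 / lam - (2 * v2 + δ2)| +
        |x3 / lam - (2 * v3 + δ3)| < 1 := by
  have hlam : 0 < lam := pos_of_mul_pos_right (hw1.1.trans_lt hw1.2) zero_le_two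
  have hsigns := exists_add_add_lt_iff_of_isLeast (r := lam)
    (isLeast_image_mul_add_neg_one_pow_mul (2 * lam) w1)
    (isLeast_image_mul_add_neg_one_pow_mul (2 * lam) w2)
    (isLeast_image_mul_add_neg_one_pow_mul (2 * lam) w3)
  have hdist := exists_add_add_lt_iff_of_isLeast (r := 1)
    (isLeast_range_abs_div_sub_two_mul_add hw1 hwx1)
    (isLeast_range_abs_div_sub_two_mul_add hw2 hwx2)
    (isLeast_range_abs_div_sub_two_mul_add hw3 hwx3)
  simp only [exists_mem_image, mem_Iic] at hsigns
  simp only [exists_range_iff, ← add_div, div_lt_one hlam] at hdist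
  rw [hdist, ← hsigns]
  have hregroup (i j k : ℕ) :
      2 * lam * (i + j + k) + (-1) ^ i * w1 + (-1) ^ j * w2 + (-1) ^ k * w3 =
        (2 * lam * i + (-1) ^ i * w1) + (2 * lam * j + (-1) ^ j * w2) +
          (2 * lam * k + (-1) ^ k * w3) := by
    ring
  simp only [hregroup, exists_and_left]

end Field

/-- Lemma 3.4(1): f^δ_{l,n}(s) ∈ S_h (i.e. its representative (w1,w2,w3) lies in some T_{ijk})
if and only if Td(l^s·t·n, u) < 1 has a solution u ∈ L_odd^δ. -/
theorem stmt_5 (lamh a1 b1 nu1 n l : ℤ) (s : ℕ) (δ1 δ2 δ3 : ℤ)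
    (hlamh : 0 < lamh) (ha1 : 0 < a1) (hb1 : 0 < b1) (hnu1 : 0 < nu1) (hn : 0 < n) (hl : 0 < l)
    (hδ : (δ1, δ2, δ3) = (1, 1, 1) ∨ (δ1, δ2, δ3) = (1, 0, 0) ∨
          (δ1, δ2, δ3) = (0, 1, 0) ∨ (δ1, δ2, δ3) = (0, 0, 1))
    (w1 w2 w3 : ℤ)
    (hw1 : 0 ≤ w1) (hw1' : w1 < 2 * lamh) (hw1c : w1 ≡ l ^ s * a1 * n - δ1 * lamh [ZMOD 2 * lamh])
    (hw2 : 0 ≤ w2) (hw2' : w2 < 2 * lamh) (hw2c : w2 ≡ l ^ s * b1 * n - δ2 * lamh [ZMOD 2 * lamh])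
    (hw3 : 0 ≤ w3) (hw3' : w3 < 2 * lamh) (hw3c : w3 ≡ l ^ s * nu1 * n - δ3 * lamh [ZMOD 2 * lamh]) :
    (∃ i j k : ℕ, i ≤ 1 ∧ j ≤ 1 ∧ k ≤ 1 ∧
        2 * lamh * ((i : ℤ) + (j : ℤ) + (k : ℤ)) +
          (-1 : ℤ) ^ i * w1 + (-1 : ℤ) ^ j * w2 + (-1 : ℤ) ^ k * w3 < lamh) ↔
    (∃ v1 v2 v3 : ℤ,
        |(l ^ s * a1 * n : ℝ) / (lamh : ℝ) - ((2 * v1 + δ1 : ℤ) : ℝ)| +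
        |(l ^ s * b1 * n : ℝ) / (lamh : ℝ) - ((2 * v2 + δ2 : ℤ) : ℝ)| +
        |(l ^ s * nu1 * n : ℝ) / (lamh : ℝ) - ((2 * v3 + δ3 : ℤ) : ℝ)| < 1) := by
  exact_mod_cast stmt_5_general (K := ℝ) (lam := lamh) (w1 := w1) (w2 := w2) (w3 := w3)
    (x1 := l ^ s * a1 * n) (x2 := l ^ s * b1 * n) (x3 := l ^ s * nu1 * n)
    (δ1 := δ1) (δ2 := δ2) (δ3 := δ3)
    ⟨mod_cast hw1, mod_cast hw1'⟩ (mod_cast AddCommGroup.modEq_iff_intModEq.2 hw1c)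
    ⟨mod_cast hw2, mod_cast hw2'⟩ (mod_cast AddCommGroup.modEq_iff_intModEq.2 hw2c)
    ⟨mod_cast hw3, mod_cast hw3'⟩ (mod_cast AddCommGroup.modEq_iff_intModEq.2 hw3c)
end

section
/- Let λ_h, α1, β1, ν1, l, n be positive integers, let s ≥ 0 be an integer, and let δ = (δ1, δ2, δ3) be one of (1,1,1), (1,0,0), (0,1,0), (0,0,1). Let (w1, w2, w3) be the unique integer triple with 0 ≤ w1, w2, w3 < 2λ_h and w1 ≡ l^s·α1·n − δ1·λ_h, w2 ≡ l^s·β1·n − δ2·λ_h, w3 ≡ l^s·ν1·n − δ3·λ_h (mod 2λ_h). Suppose (i, j, k) ∈ {0,1}³ satisfies 2λ_h·(i + j + k) + (−1)^i·w1 + (−1)^j·w2 + (−1)^k·w3 < λ_h, and suppose integers v1, v2, v3 satisfy |l^s·α1·n/λ_h − (2v1 + δ1)| + |l^s·β1·n/λ_h − (2v2 + δ2)| + |l^s·ν1·n/λ_h − (2v3 + δ3)| < 1. Then this sum equals 2(i + j + k) + ((−1)^i·w1 + (−1)^j·w2 + (−1)^k·w3)/λ_h. -/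
/-!
Scaled by `L`, the displacement from the lattice point `2v + δ` to the point `X / L` is
`x = X - L(2v + δ)`. On the other side, `2Lε + (-1)^ε w` with `ε ∈ {0, 1}` is the distance from
`w ∈ [0, 2L]` to the endpoint `2Lε`, that is `|y|` with `y = w - 2Lε`. The vectors `x` and `y` are
congruent modulo `2L` and their taxicab norms add up to less than `2L`, so they are equal.
-/

theorem eq_of_intModEq_of_abs_add_abs_lt {m a b : ℤ} (hmod : a ≡ b [ZMOD m])
    (hlt : |a| + |b| < m) : a = b := by
  have hzero : b - a = 0 :=
    Int.eq_zero_of_abs_lt_dvd hmod.dvd ((abs_sub b a).trans_lt (by rwa [add_comm]))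
  exact (sub_eq_zero.mp hzero).symm

theorem two_mul_mul_add_neg_one_pow_mul_eq_abs_sub {L w : ℤ} {ε : ℕ} (hε : ε ≤ 1)
    (hw₀ : 0 ≤ w) (hw₁ : w ≤ 2 * L) : 2 * L * ε + (-1) ^ ε * w = |w - 2 * L * ε| := by
  obtain rfl | rfl := Nat.le_one_iff_eq_zero_or_eq_one.mp hε
  · simp [abs_of_nonneg hw₀]
  · rw [Nat.cast_one, mul_one, abs_of_nonpos (sub_nonpos.mpr hw₁)]
    ring

section Taxicab

variable {ι : Type*} [Fintype ι]

theorem eq_of_intModEq_of_sum_abs_add_sum_abs_lt {m : ℤ} {x y : ι → ℤ}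
    (hmod : ∀ c, x c ≡ y c [ZMOD m]) (hlt : ∑ c, |x c| + ∑ c, |y c| < m) : x = y := by
  funext c
  have hle (z : ι → ℤ) : |z c| ≤ ∑ c, |z c| :=
    Finset.single_le_sum (fun c _ => abs_nonneg (z c)) (Finset.mem_univ c)
  exact eq_of_intModEq_of_abs_add_abs_lt (hmod c) ((add_le_add (hle x) (hle y)).trans_lt hlt)

variable {K : Type*} [Field K] [LinearOrder K] [IsStrictOrderedRing K]

theorem sum_abs_intCast_div_sub_intCast {L : ℤ} (hL : 0 < L) (X z : ι → ℤ) :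
    ∑ c, |(X c : K) / L - z c| = ((∑ c, |X c - L * z c| : ℤ) : K) / L := by
  have hL' : (0 : K) < L := Int.cast_pos.mpr hL
  push_cast
  rw [Finset.sum_div]
  refine Finset.sum_congr rfl fun c _ => ?_
  rw [div_sub' hL'.ne', abs_div, abs_of_pos hL']

theorem stmt_6_general {L : ℤ} {X δ w v : ι → ℤ} {ε : ι → ℕ}
    (hw₀ : ∀ c, 0 ≤ w c) (hw₁ : ∀ c, w c ≤ 2 * L)
    (hwX : ∀ c, w c ≡ X c - δ c * L [ZMOD 2 * L]) (hε : ∀ c, ε c ≤ 1)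
    (hcorner : 2 * L * ∑ c, (ε c : ℤ) + ∑ c, (-1) ^ ε c * w c < L)
    (hv : ∑ c, |(X c : K) / L - ((2 * v c + δ c : ℤ) : K)| ≤ 1) :
    ∑ c, |(X c : K) / L - ((2 * v c + δ c : ℤ) : K)| =
      2 * ∑ c, (ε c : K) + (∑ c, (-1) ^ ε c * (w c : K)) / L := by
  have corner_eq :
      2 * L * ∑ c, (ε c : ℤ) + ∑ c, (-1) ^ ε c * w c = ∑ c, |w c - 2 * L * ε c| := by
    rw [Finset.mul_sum, ← Finset.sum_add_distrib]
    exact Finset.sum_congr rfl fun c _ =>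
      two_mul_mul_add_neg_one_pow_mul_eq_abs_sub (hε c) (hw₀ c) (hw₁ c)
  rw [corner_eq] at hcorner
  have hL : 0 < L := (Finset.sum_nonneg fun c _ => abs_nonneg _).trans_lt hcorner
  have hL' : (0 : K) < L := Int.cast_pos.mpr hL
  rw [sum_abs_intCast_div_sub_intCast hL] at hv ⊢
  have norm_le : ∑ c, |X c - L * (2 * v c + δ c)| ≤ L := by
    rw [div_le_one hL'] at hv
    exact_mod_cast hv
  have hmod (c : ι) : X c - L * (2 * v c + δ c) ≡ w c - 2 * L * ε c [ZMOD 2 * L] := by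
    obtain ⟨q, hq⟩ := (hwX c).dvd
    exact Int.modEq_iff_dvd.mpr ⟨v c - q - ε c, by linear_combination -hq⟩
  have displacement_eq : (fun c => X c - L * (2 * v c + δ c)) = fun c => w c - 2 * L * ε c :=
    eq_of_intModEq_of_sum_abs_add_sum_abs_lt hmod (by linarith)
  simp only [congrFun displacement_eq]
  rw [← corner_eq]
  push_cast
  field_simp

end Taxicab

/-- Lemma 3.4(2): when f^δ_{l,n}(s) ∈ T_{ijk} with representative (w1,w2,w3), the taxicab
value Td(l^s·t·n, u) equals 2(i+j+k) + ((−1)^i w1 + (−1)^j w2 + (−1)^k w3)/λ_h. -/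
theorem stmt_6 (lamh a1 b1 nu1 n l : ℤ) (s : ℕ) (δ1 δ2 δ3 : ℤ)
    (hlamh : 0 < lamh) (ha1 : 0 < a1) (hb1 : 0 < b1) (hnu1 : 0 < nu1) (hn : 0 < n) (hl : 0 < l)
    (hδ : (δ1, δ2, δ3) = (1, 1, 1) ∨ (δ1, δ2, δ3) = (1, 0, 0) ∨
          (δ1, δ2, δ3) = (0, 1, 0) ∨ (δ1, δ2, δ3) = (0, 0, 1))
    (w1 w2 w3 : ℤ)
    (hw1 : 0 ≤ w1) (hw1' : w1 < 2 * lamh) (hw1c : w1 ≡ l ^ s * a1 * n - δ1 * lamh [ZMOD 2 * lamh])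
    (hw2 : 0 ≤ w2) (hw2' : w2 < 2 * lamh) (hw2c : w2 ≡ l ^ s * b1 * n - δ2 * lamh [ZMOD 2 * lamh])
    (hw3 : 0 ≤ w3) (hw3' : w3 < 2 * lamh) (hw3c : w3 ≡ l ^ s * nu1 * n - δ3 * lamh [ZMOD 2 * lamh])
    (i j k : ℕ) (hi : i ≤ 1) (hj : j ≤ 1) (hk : k ≤ 1)
    (hijk : 2 * lamh * ((i : ℤ) + (j : ℤ) + (k : ℤ)) +
        (-1 : ℤ) ^ i * w1 + (-1 : ℤ) ^ j * w2 + (-1 : ℤ) ^ k * w3 < lamh)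
    (v1 v2 v3 : ℤ)
    (hv : |(l ^ s * a1 * n : ℝ) / (lamh : ℝ) - ((2 * v1 + δ1 : ℤ) : ℝ)| +
          |(l ^ s * b1 * n : ℝ) / (lamh : ℝ) - ((2 * v2 + δ2 : ℤ) : ℝ)| +
          |(l ^ s * nu1 * n : ℝ) / (lamh : ℝ) - ((2 * v3 + δ3 : ℤ) : ℝ)| < 1) :
    |(l ^ s * a1 * n : ℝ) / (lamh : ℝ) - ((2 * v1 + δ1 : ℤ) : ℝ)| +
    |(l ^ s * b1 * n : ℝ) / (lamh : ℝ) - ((2 * v2 + δ2 : ℤ) : ℝ)| +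
    |(l ^ s * nu1 * n : ℝ) / (lamh : ℝ) - ((2 * v3 + δ3 : ℤ) : ℝ)| =
      2 * ((i : ℝ) + (j : ℝ) + (k : ℝ)) +
        ((-1 : ℝ) ^ i * (w1 : ℝ) + (-1 : ℝ) ^ j * (w2 : ℝ) + (-1 : ℝ) ^ k * (w3 : ℝ)) / (lamh : ℝ) := by
  simpa [Fin.sum_univ_three] using
    stmt_6_general (K := ℝ) (L := lamh) (X := ![l ^ s * a1 * n, l ^ s * b1 * n, l ^ s * nu1 * n])
      (δ := ![δ1, δ2, δ3]) (w := ![w1, w2, w3]) (v := ![v1, v2, v3]) (ε := ![i, j, k])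
      (by simp [Fin.forall_fin_succ, hw1, hw2, hw3])
      (by simp [Fin.forall_fin_succ, hw1'.le, hw2'.le, hw3'.le])
      (fun c => by fin_cases c <;> assumption)
      (by simp [Fin.forall_fin_succ, hi, hj, hk])
      (by simpa [Fin.sum_univ_three, add_assoc] using hijk)
      (by simpa [Fin.sum_univ_three] using hv.le)
end

section
/- Let λ_h, α1, β1, ν1, n be positive integers and set q = (α1·n/λ_h, β1·n/λ_h, ν1·n/λ_h) ∈ ℚ³. Let l, l' ≥ 1 be integers with l' ≡ l (mod 2λ_h) or l' ≡ −l (mod 2λ_h). Then for every integer s ≥ 0: there exists u ∈ L_odd with |l^s·q1 − u1| + |l^s·q2 − u2| + |l^s·q3 − u3| < 1 if and only if there exists u' ∈ L_odd with |l'^s·q1 − u'1| + |l'^s·q2 − u'2| + |l'^s·q3 − u'3| < 1, and in that case the two sums are equal. -/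
/-!
Distinct integer points with odd coordinate sums are at taxicab distance at least `2`, so by the
triangle inequality no point `x` has two of them at distance less than `1`. The points with odd
coordinate sum are permuted by `u ↦ -u` and by translations by integer vectors with even coordinate
sum, which are isometries. If `m • x` is integral and `a ≡ ±b` modulo `2 * m`, then `a • x ∓ b • x`
has even integer coordinates, so such symmetries carry `b • x` to `a • x`.
-/

section Integers

theorem even_sum_abs_iff {ι : Type*} (s : Finset ι) (z : ι → ℤ) :
    Even (∑ i ∈ s, |z i|) ↔ Even (∑ i ∈ s, z i) := by
  have even_diff : Even (∑ i ∈ s, |z i| - ∑ i ∈ s, z i) := by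
    rw [← Finset.sum_sub_distrib]
    exact Finset.even_sum _ fun i _ ↦ Int.even_sub.mpr even_abs
  exact Int.even_sub.mp even_diff

theorem two_le_sum_abs_of_even {ι : Type*} [Fintype ι] {z : ι → ℤ} (hz : z ≠ 0)
    (heven : Even (∑ i, z i)) : 2 ≤ ∑ i, |z i| := by
  obtain ⟨j, hj⟩ := Function.ne_iff.mp hz
  have sum_pos : 0 < ∑ i, |z i| :=
    Finset.sum_pos' (fun _ _ ↦ abs_nonneg _) ⟨j, Finset.mem_univ j, abs_pos.mpr hj⟩
  obtain ⟨k, hk⟩ := (even_sum_abs_iff Finset.univ z).mpr heven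
  lia

theorem pow_modEq_or_modEq_neg {m a b : ℤ} (h : a ≡ b [ZMOD m] ∨ a ≡ -b [ZMOD m]) (s : ℕ) :
    a ^ s ≡ b ^ s [ZMOD m] ∨ a ^ s ≡ -b ^ s [ZMOD m] := by
  obtain h | h := h
  · exact .inl (h.pow s)
  · obtain hs | hs := s.even_or_odd
    · exact .inl (hs.neg_pow b ▸ h.pow s)
    · exact .inr (hs.neg_pow b ▸ h.pow s)

end Integers

section TaxicabDist

variable {ι R : Type*} [Fintype ι] [Ring R] [LinearOrder R]

/-- The taxicab distance `Td(x, u)` from a point `x` to a point `u` with integer coordinates. -/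
def taxicabDist (x : ι → R) (u : ι → ℤ) : R :=
  ∑ i, |x i - u i|

/-- The values less than `1` of the taxicab distance from `x` to a point of `L_odd`, that is, to an
integer point whose coordinate sum is odd. This set is nonempty when `Td(x, u) < 1` is solvable in
`L_odd`, and its elements are the values at the solutions. -/
def oddTaxicabValues (x : ι → R) : Set R :=
  taxicabDist x '' {u | Odd (∑ i, u i) ∧ taxicabDist x u < 1}

theorem oddTaxicabValues_nonempty_iff {x : ι → R} :
    (oddTaxicabValues x).Nonempty ↔ ∃ u : ι → ℤ, Odd (∑ i, u i) ∧ taxicabDist x u < 1 :=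
  Set.image_nonempty

theorem taxicabDist_mem_oddTaxicabValues {x : ι → R} {u : ι → ℤ} (hu : Odd (∑ i, u i))
    (hxu : taxicabDist x u < 1) : taxicabDist x u ∈ oddTaxicabValues x :=
  ⟨u, ⟨hu, hxu⟩, rfl⟩

theorem taxicabDist_neg_neg (x : ι → R) (u : ι → ℤ) : taxicabDist (-x) (-u) = taxicabDist x u := by
  refine Finset.sum_congr rfl fun i _ ↦ ?_
  rw [abs_sub_comm (x i), Pi.neg_apply, Pi.neg_apply, Int.cast_neg, neg_sub_neg]

theorem taxicabDist_add_intCast (x : ι → R) (u k : ι → ℤ) :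
    taxicabDist (x + (fun i ↦ (k i : R))) (u + k) = taxicabDist x u := by
  simp only [taxicabDist, Pi.add_apply, Int.cast_add, add_sub_add_right_eq_sub]

theorem oddTaxicabValues_eq_of_equiv {x y : ι → R} (e : (ι → ℤ) ≃ (ι → ℤ))
    (hodd : ∀ u, Odd (∑ i, e u i) ↔ Odd (∑ i, u i))
    (hdist : ∀ u, taxicabDist y (e u) = taxicabDist x u) :
    oddTaxicabValues y = oddTaxicabValues x := by
  ext d
  exact (e.exists_congr fun u ↦ by simp only [Set.mem_ofPred_eq, hodd, hdist]).symm

theorem oddTaxicabValues_neg (x : ι → R) : oddTaxicabValues (-x) = oddTaxicabValues x :=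
  oddTaxicabValues_eq_of_equiv (.neg _)
    (fun u ↦ by simp only [Equiv.neg_apply, Pi.neg_apply, Finset.sum_neg_distrib, odd_neg])
    (taxicabDist_neg_neg x)

theorem oddTaxicabValues_add_intCast {k : ι → ℤ} (hk : Even (∑ i, k i)) (x : ι → R) :
    oddTaxicabValues (x + (fun i ↦ (k i : R))) = oddTaxicabValues x :=
  oddTaxicabValues_eq_of_equiv (.addRight k)
    (fun u ↦ by simp [Finset.sum_add_distrib, Int.odd_add, hk])
    (taxicabDist_add_intCast x · k)

theorem oddTaxicabValues_zsmul_congr {x : ι → R} {m a b : ℤ} (hx : ∀ i, ∃ c : ℤ, m • x i = c)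
    (hab : a ≡ b [ZMOD 2 * m]) : oddTaxicabValues (a • x) = oddTaxicabValues (b • x) := by
  choose c hc using hx
  obtain ⟨k, hk⟩ := hab.symm.dvd
  have translate : a • x = b • x + fun i ↦ (((2 * k) • c) i : R) := by
    ext i
    rw [eq_add_of_sub_eq' hk, add_smul, mul_right_comm, mul_smul]
    simp only [Pi.add_apply, Pi.smul_apply, hc, smul_eq_mul]
    rw [Int.cast_mul (2 * k), zsmul_eq_mul (c i : R)]
  have even_translation : Even (∑ i, ((2 * k) • c) i) := by
    simp only [Pi.smul_apply, smul_eq_mul, ← Finset.mul_sum, mul_assoc]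
    exact even_two_mul _
  rw [translate, oddTaxicabValues_add_intCast even_translation]

theorem oddTaxicabValues_zsmul_congr_or_neg {x : ι → R} {m a b : ℤ}
    (hx : ∀ i, ∃ c : ℤ, m • x i = c) (hab : a ≡ b [ZMOD 2 * m] ∨ a ≡ -b [ZMOD 2 * m]) :
    oddTaxicabValues (a • x) = oddTaxicabValues (b • x) := by
  obtain hab | hab := hab
  · exact oddTaxicabValues_zsmul_congr hx hab
  · rw [oddTaxicabValues_zsmul_congr hx hab, neg_smul, oddTaxicabValues_neg]

section Uniqueness

variable [IsStrictOrderedRing R]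

theorem intCast_sum_abs_sub_le (x : ι → R) (u v : ι → ℤ) :
    ((∑ i, |u i - v i| : ℤ) : R) ≤ taxicabDist x u + taxicabDist x v := by
  rw [taxicabDist, taxicabDist, ← Finset.sum_add_distrib, Int.cast_sum]
  refine Finset.sum_le_sum fun i _ ↦ ?_
  rw [Int.cast_abs, Int.cast_sub, abs_sub_comm (x i)]
  exact abs_sub_le _ _ _

theorem eq_of_taxicabDist_lt_one {x : ι → R} {u v : ι → ℤ} (hu : Odd (∑ i, u i))
    (hv : Odd (∑ i, v i)) (hxu : taxicabDist x u < 1) (hxv : taxicabDist x v < 1) : u = v := by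
  by_contra huv
  have even_sub : Even (∑ i, (u - v) i) := by
    simpa only [Pi.sub_apply, Finset.sum_sub_distrib] using hu.sub_odd hv
  have two_le : (2 : R) ≤ ((∑ i, |u i - v i| : ℤ) : R) :=
    mod_cast two_le_sum_abs_of_even (sub_ne_zero.mpr huv) even_sub
  have lt_two : taxicabDist x u + taxicabDist x v < 2 :=
    one_add_one_eq_two (R := R) ▸ add_lt_add hxu hxv
  exact (two_le.trans (intCast_sum_abs_sub_le x u v)).not_gt lt_two

theorem oddTaxicabValues_subsingleton (x : ι → R) : (oddTaxicabValues x).Subsingleton := by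
  rintro _ ⟨u, ⟨hu, hxu⟩, rfl⟩ _ ⟨v, ⟨hv, hxv⟩, rfl⟩
  rw [eq_of_taxicabDist_lt_one hu hv hxu hxv]

theorem stmt_7_general {x : ι → R} {m l l' : ℤ} (hx : ∀ i, ∃ c : ℤ, m • x i = c)
    (hcong : l' ≡ l [ZMOD 2 * m] ∨ l' ≡ -l [ZMOD 2 * m]) (s : ℕ) :
    ((∃ u : ι → ℤ, Odd (∑ i, u i) ∧ taxicabDist (l ^ s • x) u < 1) ↔
      ∃ u : ι → ℤ, Odd (∑ i, u i) ∧ taxicabDist (l' ^ s • x) u < 1) ∧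
    ∀ u u' : ι → ℤ, Odd (∑ i, u i) → Odd (∑ i, u' i) →
      taxicabDist (l ^ s • x) u < 1 → taxicabDist (l' ^ s • x) u' < 1 →
      taxicabDist (l ^ s • x) u = taxicabDist (l' ^ s • x) u' := by
  have values_eq : oddTaxicabValues (l' ^ s • x) = oddTaxicabValues (l ^ s • x) :=
    oddTaxicabValues_zsmul_congr_or_neg hx (pow_modEq_or_modEq_neg hcong s)
  refine ⟨?_, fun u u' hu hu' hlt hlt' ↦ ?_⟩
  · rw [← oddTaxicabValues_nonempty_iff, ← oddTaxicabValues_nonempty_iff, values_eq]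
  · exact oddTaxicabValues_subsingleton _ (taxicabDist_mem_oddTaxicabValues hu hlt)
      (values_eq ▸ taxicabDist_mem_oddTaxicabValues hu' hlt')

end Uniqueness

end TaxicabDist

/-- Theorem 3.5(1) (well-definedness): whether Td(l^s·t·n, u) < 1 has a solution u ∈ L_odd,
and its value, depend only on the class of l in (ℤ/2λ_hℤ)/{±1}. -/
theorem stmt_7 (lamh a1 b1 nu1 n l l' : ℤ)
    (hlamh : 0 < lamh) (ha1 : 0 < a1) (hb1 : 0 < b1) (hnu1 : 0 < nu1) (hn : 0 < n)
    (hl : 1 ≤ l) (hl' : 1 ≤ l')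
    (hcong : l' ≡ l [ZMOD 2 * lamh] ∨ l' ≡ -l [ZMOD 2 * lamh]) (s : ℕ) :
    ((∃ u1 u2 u3 : ℤ, Odd (u1 + u2 + u3) ∧
        |(l : ℝ) ^ s * ((a1 * n : ℝ) / (lamh : ℝ)) - (u1 : ℝ)| +
        |(l : ℝ) ^ s * ((b1 * n : ℝ) / (lamh : ℝ)) - (u2 : ℝ)| +
        |(l : ℝ) ^ s * ((nu1 * n : ℝ) / (lamh : ℝ)) - (u3 : ℝ)| < 1) ↔
      (∃ u1 u2 u3 : ℤ, Odd (u1 + u2 + u3) ∧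
        |(l' : ℝ) ^ s * ((a1 * n : ℝ) / (lamh : ℝ)) - (u1 : ℝ)| +
        |(l' : ℝ) ^ s * ((b1 * n : ℝ) / (lamh : ℝ)) - (u2 : ℝ)| +
        |(l' : ℝ) ^ s * ((nu1 * n : ℝ) / (lamh : ℝ)) - (u3 : ℝ)| < 1)) ∧
    (∀ u1 u2 u3 u1' u2' u3' : ℤ, Odd (u1 + u2 + u3) → Odd (u1' + u2' + u3') →
      |(l : ℝ) ^ s * ((a1 * n : ℝ) / (lamh : ℝ)) - (u1 : ℝ)| +
        |(l : ℝ) ^ s * ((b1 * n : ℝ) / (lamh : ℝ)) - (u2 : ℝ)| +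
        |(l : ℝ) ^ s * ((nu1 * n : ℝ) / (lamh : ℝ)) - (u3 : ℝ)| < 1 →
      |(l' : ℝ) ^ s * ((a1 * n : ℝ) / (lamh : ℝ)) - (u1' : ℝ)| +
        |(l' : ℝ) ^ s * ((b1 * n : ℝ) / (lamh : ℝ)) - (u2' : ℝ)| +
        |(l' : ℝ) ^ s * ((nu1 * n : ℝ) / (lamh : ℝ)) - (u3' : ℝ)| < 1 →
      |(l : ℝ) ^ s * ((a1 * n : ℝ) / (lamh : ℝ)) - (u1 : ℝ)| +
        |(l : ℝ) ^ s * ((b1 * n : ℝ) / (lamh : ℝ)) - (u2 : ℝ)| +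
        |(l : ℝ) ^ s * ((nu1 * n : ℝ) / (lamh : ℝ)) - (u3 : ℝ)| =
      |(l' : ℝ) ^ s * ((a1 * n : ℝ) / (lamh : ℝ)) - (u1' : ℝ)| +
        |(l' : ℝ) ^ s * ((b1 * n : ℝ) / (lamh : ℝ)) - (u2' : ℝ)| +
        |(l' : ℝ) ^ s * ((nu1 * n : ℝ) / (lamh : ℝ)) - (u3' : ℝ)|) := by
  have integral : ∀ i, ∃ c : ℤ,
      lamh • ![(a1 * n : ℝ) / lamh, b1 * n / lamh, nu1 * n / lamh] i = c := fun i ↦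
    ⟨![a1 * n, b1 * n, nu1 * n] i, by fin_cases i <;> simp [mul_div_cancel₀, hlamh.ne']⟩
  simpa [taxicabDist, Fin.exists_fin_succ_pi, Fin.forall_fin_succ_pi, Fin.sum_univ_three] using
    stmt_7_general integral hcong s
end

section
/- Let λ_h, α1, β1, ν1, n be positive integers and let l ≥ 1 be an integer with gcd(l, 2λ_h) = 1. Suppose there exists an integer s ≥ 0 and u ∈ L_odd with |l^s·α1·n/λ_h − u1| + |l^s·β1·n/λ_h − u2| + |l^s·ν1·n/λ_h − u3| < 1. Then the least such s is strictly smaller than the multiplicative order of l modulo 2λ_h. -/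
/-!
Whether `x` lies within a given taxicab distance of the lattice of integer points with odd
coordinate sum depends only on the coordinates of `x` modulo `2`, since `2ℤ^ι` translates that
lattice into itself. Hence, for an integer vector `c`, this property of `l ^ s • c / m` depends on
`s` only through `l ^ s` modulo `2 * m`, and the powers of `l` in `ZMod (2 * m)` repeat with
period `orderOf l`.
-/

section OddLattice

variable {ι : Type*} [Fintype ι] {r : ℝ} {x y : ι → ℝ}

/-- `NearOddLattice r x` says that `x` is at taxicab distance less than `r` from some integer point
whose coordinate sum is odd. For `ι = Fin 3` and `r = 1` this is the solvability of
`Td(x, u) < 1` in `u ∈ L_odd`. -/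
def NearOddLattice (r : ℝ) (x : ι → ℝ) : Prop :=
  ∃ u : ι → ℤ, Odd (∑ i, u i) ∧ ∑ i, |x i - u i| < r

theorem nearOddLattice_fin_three_iff {x : Fin 3 → ℝ} :
    NearOddLattice r x ↔ ∃ u₁ u₂ u₃ : ℤ,
      Odd (u₁ + u₂ + u₃) ∧ |x 0 - u₁| + |x 1 - u₂| + |x 2 - u₃| < r := by
  simp [NearOddLattice, Fin.exists_fin_succ_pi, Fin.sum_univ_three]

theorem NearOddLattice.of_modEq_two (hx : NearOddLattice r x) (h : ∀ i, x i ≡ y i [PMOD 2]) :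
    NearOddLattice r y := by
  obtain ⟨u, hodd, hdist⟩ := hx
  choose v hv using fun i ↦ AddCommGroup.modEq_iff_eq_add_zsmul.mp (h i)
  refine ⟨fun i ↦ u i + 2 * v i, ?_, ?_⟩
  · rw [Finset.sum_add_distrib, ← Finset.mul_sum]
    exact hodd.add_even (even_two_mul _)
  · have hsub (i : ι) : y i - (u i + 2 * v i : ℤ) = x i - u i := by
      rw [hv i, zsmul_eq_mul]
      push_cast
      ring
    simpa only [hsub] using hdist

end OddLattice

theorem intCast_div_modEq_intCast_div {K : Type*} [Field K] [CharZero K] {a b p m : ℤ}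
    (hm : m ≠ 0) : (a / m : K) ≡ b / m [PMOD (p : K)] ↔ a ≡ b [ZMOD p * m] := by
  rw [AddCommGroup.div_modEq_div (Int.cast_ne_zero.mpr hm), ← Int.cast_mul,
    AddCommGroup.intCast_modEq_intCast, AddCommGroup.modEq_iff_intModEq]

theorem lt_orderOf_of_forall_lt_pow_ne_pow {G : Type*} [Monoid G] {g : G} (hg : IsOfFinOrder g)
    {s : ℕ} (hs : ∀ t < s, g ^ t ≠ g ^ s) : s < orderOf g := by
  by_contra! hle
  exact hs (s % orderOf g) ((Nat.mod_lt s hg.orderOf_pos).trans_le hle) (pow_mod_orderOf g s)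

theorem stmt_9_general {ι : Type*} [Fintype ι] {r : ℝ} {m s : ℕ} {l : ℤ} (c : ι → ℤ) (hm : m ≠ 0)
    (hl : IsOfFinOrder (l : ZMod (2 * m)))
    (hs : NearOddLattice r fun i ↦ (l ^ s * c i / m : ℝ))
    (hmin : ∀ t < s, ¬ NearOddLattice r fun i ↦ (l ^ t * c i / m : ℝ)) :
    s < orderOf (l : ZMod (2 * m)) := by
  refine lt_orderOf_of_forall_lt_pow_ne_pow hl fun t hts hpow ↦
    hmin t hts (hs.of_modEq_two fun i ↦ ?_)
  have hlmod : l ^ s ≡ l ^ t [ZMOD 2 * m] := by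
    have hcast : ((l ^ s : ℤ) : ZMod (2 * m)) = (l ^ t : ℤ) := by
      rw [Int.cast_pow, Int.cast_pow, hpow]
    exact_mod_cast (ZMod.intCast_eq_intCast_iff _ _ _).mp hcast
  exact_mod_cast (intCast_div_modEq_intCast_div (K := ℝ) (Nat.cast_ne_zero.mpr hm)).mpr
    (hlmod.mul_right (c i))

/-- Theorem 3.5(3): if Ds(l) < ∞ then Ds(l) is strictly smaller than the multiplicative
order of l in (ℤ/2λ_hℤ)*. -/
theorem stmt_9 (lamh a1 b1 nu1 n l : ℕ)
    (hlamh : 0 < lamh) (ha1 : 0 < a1) (hb1 : 0 < b1) (hnu1 : 0 < nu1) (hn : 0 < n)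
    (hl : 1 ≤ l) (hcop : Nat.Coprime l (2 * lamh)) (s : ℕ)
    (hs : ∃ u1 u2 u3 : ℤ, Odd (u1 + u2 + u3) ∧
      |(l ^ s * a1 * n : ℝ) / (lamh : ℝ) - (u1 : ℝ)| +
      |(l ^ s * b1 * n : ℝ) / (lamh : ℝ) - (u2 : ℝ)| +
      |(l ^ s * nu1 * n : ℝ) / (lamh : ℝ) - (u3 : ℝ)| < 1)
    (hmin : ∀ s' : ℕ, s' < s → ¬ ∃ u1 u2 u3 : ℤ, Odd (u1 + u2 + u3) ∧
      |(l ^ s' * a1 * n : ℝ) / (lamh : ℝ) - (u1 : ℝ)| +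
      |(l ^ s' * b1 * n : ℝ) / (lamh : ℝ) - (u2 : ℝ)| +
      |(l ^ s' * nu1 * n : ℝ) / (lamh : ℝ) - (u3 : ℝ)| < 1) :
    s < orderOf (l : ZMod (2 * lamh)) := by
  have hunit : IsUnit ((l : ℤ) : ZMod (2 * lamh)) := by
    rwa [Int.cast_natCast, ZMod.isUnit_iff_coprime]
  simpa only [Int.cast_natCast] using
    stmt_9_general ![(a1 * n : ℤ), b1 * n, nu1 * n] hlamh.ne' hunit.isOfFinOrder
      (by simpa [nearOddLattice_fin_three_iff, mul_assoc] using hs)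
      (by simpa [nearOddLattice_fin_three_iff, mul_assoc] using hmin)
end

section
/- Let α, β, ν, λ be positive integers satisfying the strict triangle inequalities α < β + ν, β < α + ν, ν < α + β and the inequality α + β + ν ≤ 2λ (as hold for the invariants of any regular trinomial). Then for every triple (u1, u2, u3) ∈ ℤ³ with u1 + u2 + u3 odd, one has |α/λ − u1| + |β/λ − u2| + |ν/λ − u3| ≥ 1. -/
/-!
The four inequalities say that `t = (α/λ, β/λ, ν/λ)` lies in the tetrahedron spanned by the even
vertices of the unit cube, whose facets cut off the odd vertices at taxicab distance `1`. A lattice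
point that is not a vertex of the cube has a coordinate outside `{0, 1}`, and this coordinate alone
contributes at least `1` to its distance from any point of the cube. So only the odd vertices could
be closer than `1` to `t`, and these are excluded by the facets. The argument works for the
parity polytope in every dimension.
-/

open Finset

section ParityPolytope

variable {ι R : Type*} [Fintype ι] [DecidableEq ι]
  [CommRing R] [LinearOrder R] [IsStrictOrderedRing R]

variable (ι R) in
/-- The parity polytope (or half cube): the points of the unit cube satisfying Jeroslow's
inequality for each odd vertex. Over `ℝ` it is the convex hull of the vertices of the cube with
even coordinate sum. Vertices are encoded by their supports `S`, and the sum is the taxicab distance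
from `t` to that vertex. -/
def parityPolytope : Set (ι → R) :=
  {t ∈ Set.Icc 0 1 | ∀ S : Finset ι, Odd #S → 1 ≤ ∑ i, if i ∈ S then 1 - t i else t i}

theorem one_le_abs_sub_intCast {x : R} (hx : x ∈ Set.Icc 0 1) {m : ℤ} (hm0 : m ≠ 0)
    (hm1 : m ≠ 1) : 1 ≤ |x - m| := by
  rcases (by omega : m ≤ -1 ∨ 2 ≤ m) with hm | hm
  · have hm' : (m : R) ≤ -1 := by exact_mod_cast hm
    exact le_abs.2 (.inl (by linarith [hx.1]))
  · have hm' : (2 : R) ≤ m := by exact_mod_cast hm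
    exact le_abs.2 (.inr (by linarith [hx.2]))

theorem sum_abs_sub_ite_mem {t : ι → R} (ht : t ∈ Set.Icc 0 1) (S : Finset ι) :
    ∑ i, |t i - ((if i ∈ S then 1 else 0 : ℤ) : R)| = ∑ i, if i ∈ S then 1 - t i else t i := by
  refine sum_congr rfl fun i _ ↦ ?_
  have h0 : 0 ≤ t i := ht.1 i
  have h1 : 0 ≤ 1 - t i := sub_nonneg.2 (ht.2 i)
  split_ifs
  · rw [Int.cast_one, abs_sub_comm, abs_of_nonneg h1]
  · rw [Int.cast_zero, sub_zero, abs_of_nonneg h0]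

theorem one_le_sum_abs_sub_of_mem_parityPolytope {t : ι → R} (ht : t ∈ parityPolytope ι R)
    {u : ι → ℤ} (hu : Odd (∑ i, u i)) : 1 ≤ ∑ i, |t i - u i| := by
  obtain ⟨hcube, hodd⟩ := ht
  by_cases hvertex : ∀ i, u i = 0 ∨ u i = 1
  · obtain ⟨S, rfl⟩ : ∃ S : Finset ι, u = fun i ↦ if i ∈ S then 1 else 0 :=
      ⟨univ.filter (u · = 1), by ext i; rcases hvertex i with h | h <;> simp [h]⟩
    have hS : Odd #S := by simpa using hu
    exact (hodd S hS).trans_eq (sum_abs_sub_ite_mem hcube S).symm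
  · push Not at hvertex
    obtain ⟨i, hi0, hi1⟩ := hvertex
    calc
      1 ≤ |t i - u i| := one_le_abs_sub_intCast ⟨hcube.1 i, hcube.2 i⟩ hi0 hi1
      _ ≤ ∑ j, |t j - u j| :=
        single_le_sum (f := fun j ↦ |t j - u j|) (fun _ _ ↦ abs_nonneg _) (mem_univ i)

theorem mem_parityPolytope_fin_three {x y z : R} (hx : x ≤ y + z) (hy : y ≤ x + z) (hz : z ≤ x + y)
    (hsum : x + y + z ≤ 2) : ![x, y, z] ∈ parityPolytope (Fin 3) R := by
  have hcube : ![x, y, z] ∈ Set.Icc 0 1 := by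
    constructor <;> intro i <;> fin_cases i <;> dsimp <;> linarith
  have odd_subset : ∀ S : Finset (Fin 3), Odd #S → S = {0} ∨ S = {1} ∨ S = {2} ∨ S = univ := by
    decide
  refine ⟨hcube, fun S hS ↦ ?_⟩
  rcases odd_subset S hS with rfl | rfl | rfl | rfl <;>
    simp only [Fin.sum_univ_three, mem_singleton, mem_univ, Fin.reduceEq, if_true, if_false,
      Matrix.cons_val] <;>
    linarith

end ParityPolytope

theorem stmt_11_general {K : Type*} [Field K] [LinearOrder K] [IsStrictOrderedRing K]
    {α β ν lam : K} (hlam : 0 < lam) (t1 : α ≤ β + ν) (t2 : β ≤ α + ν) (t3 : ν ≤ α + β)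
    (hsum : α + β + ν ≤ 2 * lam) {u1 u2 u3 : ℤ} (hu : Odd (u1 + u2 + u3)) :
    1 ≤ |α / lam - u1| + |β / lam - u2| + |ν / lam - u3| := by
  have ht : ![α / lam, β / lam, ν / lam] ∈ parityPolytope (Fin 3) K := by
    apply mem_parityPolytope_fin_three <;> simp only [← add_div]
    · gcongr
    · gcongr
    · gcongr
    · exact (div_le_iff₀ hlam).2 hsum
  have hu' : Odd (∑ i, ![u1, u2, u3] i) := by simpa [Fin.sum_univ_three] using hu
  simpa [Fin.sum_univ_three] using one_le_sum_abs_sub_of_mem_parityPolytope ht hu'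

/-- Theorem 4.1(1): for the invariants of a regular trinomial, Td(t, u) ≥ 1 for every
u ∈ L_odd, where t = (α/λ, β/λ, ν/λ). -/
theorem stmt_11 (α β ν lam : ℤ)
    (hα : 0 < α) (hβ : 0 < β) (hν : 0 < ν) (hlam : 0 < lam)
    (t1 : α < β + ν) (t2 : β < α + ν) (t3 : ν < α + β)
    (hsum : α + β + ν ≤ 2 * lam) :
    ∀ u1 u2 u3 : ℤ, Odd (u1 + u2 + u3) →
      1 ≤ |(α : ℝ) / (lam : ℝ) - (u1 : ℝ)| + |(β : ℝ) / (lam : ℝ) - (u2 : ℝ)| +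
          |(ν : ℝ) / (lam : ℝ) - (u3 : ℝ)| := fun _ _ _ hu ↦
  stmt_11_general (mod_cast hlam) (mod_cast t1.le) (mod_cast t2.le) (mod_cast t3.le)
    (mod_cast hsum) hu
end

section
/- Let a1 > a2 ≥ 1 be integers with 2a1 > d where d = a1 + a2, set α = 2a1 − d and λ = a1² − a1·a2 + a2², let n ≥ 1 be an integer and q = αn/λ. Let m1 be an odd integer with |q − m1| minimal among odd integers. Then: (i) if |q − m1| < 1/3, there exists u ∈ L_odd with |q − u1| + |q − u2| + |q − u3| < 1, namely u = (m1, m1, m1), and the value of this sum is 3|q − m1|; (ii) if |q − m1| ≥ 1/3, there is no u ∈ L_odd with |q − u1| + |q − u2| + |q − u3| < 1. -/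
/-!
Two distinct integers lie at distance at least `1` from each other, so the distances from a point
to them add up to at least `1`. Hence an integer vector `u` at taxicab distance less than `1` from
a diagonal point `(x, …, x)` is itself diagonal, say `u = (k, …, k)`. If its coordinate sum is odd,
then `k` is odd, and a diagonal vector does best when `k` is an odd integer nearest to `x`.
-/

section OrderedRing

variable {R ι : Type*} [Ring R] [LinearOrder R] [IsStrictOrderedRing R] [Fintype ι]
  {x : R} {u : ι → ℤ}

theorem one_le_abs_sub_intCast_add_abs_sub_intCast_of_ne (x : R) {k l : ℤ} (hkl : k ≠ l) :
    1 ≤ |x - k| + |x - l| := by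
  have one_le_abs_cast_sub : (1 : R) ≤ |(k : R) - l| := by
    exact_mod_cast Int.one_le_abs (sub_ne_zero.mpr hkl)
  calc
    (1 : R) ≤ |(k : R) - l| := one_le_abs_cast_sub
    _ ≤ |(k : R) - x| + |x - l| := abs_sub_le _ _ _
    _ = |x - k| + |x - l| := by rw [abs_sub_comm (k : R) x]

theorem eq_of_sum_abs_sub_intCast_lt_one (hu : ∑ i, |x - u i| < 1) (i j : ι) : u i = u j := by
  by_contra hne
  have hij : i ≠ j := ne_of_apply_ne u hne
  have two_terms_le_sum : |x - u i| + |x - u j| ≤ ∑ i, |x - u i| :=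
    Finset.add_le_sum (f := fun i ↦ |x - u i|) (fun _ _ ↦ abs_nonneg _)
      (Finset.mem_univ i) (Finset.mem_univ j) hij
  exact ((one_le_abs_sub_intCast_add_abs_sub_intCast_of_ne x hne).trans two_terms_le_sum).not_gt hu

theorem exists_odd_forall_eq_of_sum_abs_sub_intCast_lt_one (hodd : Odd (∑ i, u i))
    (hu : ∑ i, |x - u i| < 1) : ∃ k, Odd k ∧ ∀ i, u i = k := by
  have sum_ne_zero : ∑ i, u i ≠ 0 := fun h ↦ Int.not_odd_zero (h ▸ hodd)
  obtain ⟨i₀, -, -⟩ := Finset.exists_ne_zero_of_sum_ne_zero sum_ne_zero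
  have eq_base (i : ι) : u i = u i₀ := eq_of_sum_abs_sub_intCast_lt_one hu i i₀
  have sum_eq : ∑ i, u i = Fintype.card ι * u i₀ := by simp [eq_base]
  rw [sum_eq] at hodd
  exact ⟨u i₀, (Int.odd_mul.mp hodd).2, eq_base⟩

theorem card_mul_abs_sub_intCast_lt_one_of_nearest_odd {m : ℤ}
    (hnear : ∀ k : ℤ, Odd k → |x - m| ≤ |x - k|) (hodd : Odd (∑ i, u i))
    (hu : ∑ i, |x - u i| < 1) : Fintype.card ι * |x - m| < 1 := by
  obtain ⟨k, hk, eq_k⟩ := exists_odd_forall_eq_of_sum_abs_sub_intCast_lt_one hodd hu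
  calc
    (Fintype.card ι : R) * |x - m| ≤ Fintype.card ι * |x - k| :=
      mul_le_mul_of_nonneg_left (hnear k hk) (Nat.cast_nonneg _)
    _ = ∑ i, |x - u i| := by simp [eq_k]
    _ < 1 := hu

end OrderedRing

theorem stmt_13_general {K ι : Type*} [Field K] [LinearOrder K] [IsStrictOrderedRing K]
    [Fintype ι] (hι : Odd (Fintype.card ι)) (x : K) (m : ℤ) (hm : Odd m)
    (hnear : ∀ k : ℤ, Odd k → |x - m| ≤ |x - k|) :
    (|x - m| < 1 / Fintype.card ι →
      Odd (∑ _i : ι, m) ∧ ∑ _i : ι, |x - m| < 1 ∧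
      ∑ _i : ι, |x - m| = Fintype.card ι * |x - m|) ∧
    (1 / Fintype.card ι ≤ |x - m| →
      ¬ ∃ u : ι → ℤ, Odd (∑ i, u i) ∧ ∑ i, |x - u i| < 1) := by
  have card_pos : (0 : K) < Fintype.card ι := by exact_mod_cast hι.pos
  have sum_eq : ∑ _i : ι, |x - m| = Fintype.card ι * |x - m| := by simp
  constructor
  · intro hlt
    have odd_sum : Odd (∑ _i : ι, m) := by
      simpa using ((Int.odd_coe_nat _).mpr hι).mul hm
    exact ⟨odd_sum, sum_eq.trans_lt ((lt_div_iff₀' card_pos).mp hlt), sum_eq⟩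
  · rintro hle ⟨u, hodd, hu⟩
    have hlt := card_mul_abs_sub_intCast_lt_one_of_nearest_odd hnear hodd hu
    exact ((div_le_iff₀' card_pos).mp hle).not_gt hlt

/-- Corollary 4.4: for a symmetric trinomial with q = αn/λ and m1 a nearest odd integer
to q, Td(t·n, u) < 1 has the solution u = (m1, m1, m1) of value 3|q − m1| if |q − m1| < 1/3,
and has no solution if |q − m1| ≥ 1/3. -/
theorem stmt_13 (a1 a2 d α lam : ℤ) (hd : d = a1 + a2)
    (ha2 : 1 ≤ a2) (ha : a2 < a1) (h2a1 : 2 * a1 > d)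
    (hα : α = 2 * a1 - d) (hlam : lam = a1 ^ 2 - a1 * a2 + a2 ^ 2)
    (n : ℤ) (hn : 1 ≤ n) (q : ℝ) (hq : q = (α * n : ℝ) / (lam : ℝ))
    (m1 : ℤ) (hm1 : Odd m1)
    (hnear : ∀ m : ℤ, Odd m → |q - (m1 : ℝ)| ≤ |q - (m : ℝ)|) :
    (|q - (m1 : ℝ)| < 1 / 3 →
      Odd (m1 + m1 + m1) ∧
      |q - (m1 : ℝ)| + |q - (m1 : ℝ)| + |q - (m1 : ℝ)| < 1 ∧
      |q - (m1 : ℝ)| + |q - (m1 : ℝ)| + |q - (m1 : ℝ)| = 3 * |q - (m1 : ℝ)|) ∧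
    (1 / 3 ≤ |q - (m1 : ℝ)| →
      ¬ ∃ u1 u2 u3 : ℤ, Odd (u1 + u2 + u3) ∧
        |q - (u1 : ℝ)| + |q - (u2 : ℝ)| + |q - (u3 : ℝ)| < 1) := by
  simpa [-Finset.sum_const, Fin.sum_univ_three, Fin.exists_fin_succ_pi] using
    stmt_13_general (ι := Fin 3) (by decide) q m1 hm1 hnear
end

section
/- Let h = x^{a1}y^{a2} + y^{a1}z^{a2} + z^{a1}x^{a2} be a symmetric trinomial of odd degree d = a1 + a2 ≥ 7 with a1 > d/2 and a2 ≥ 1. Set α = 2a1 − d, λ = a1² − a1·a2 + a2², a = gcd(α, λ) and λ_h = λ/a. Then λ_h > 6, and there exists an integer l' ≥ 1 with gcd(l', 2λ_h) = 1 such that: (a) there is no u ∈ L_odd with |α/λ − u1| + |α/λ − u2| + |α/λ − u3| < 1; and (b) there exists u ∈ L_odd with |l'·α/λ − u1| + |l'·α/λ − u2| + |l'·α/λ − u3| < 1, and the value of this sum is 6/λ_h. -/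
/-!
Writing `p / λ_h` for the reduced form of `α / λ`, both `p` and `λ_h` are odd, so `p` is invertible
modulo `2 λ_h` and some `l'` coprime to `2 λ_h` satisfies `l' p ≡ λ_h + 2 (mod 2 λ_h)`. Then
`l' α / λ` exceeds an odd integer `n` by exactly `2 / λ_h`, and `(n, n, n)` is the lattice point at
distance `6 / λ_h`. The identity `4 λ = d² + 3 α²` gives
`4 (λ - 6 |α|) = (d² - 48) + 3 (|α| - 4)²`, so `6 |α| < λ` as soon as `|d| ≥ 7`; hence `λ_h > 6`.
Finally put `t = α / λ`, so that `|t| ≤ 1 / 2`. A vector of `L_odd` has a nonzero coordinate, which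
lies at distance at least `1 - |t|` from `t`, and any other coordinate lies at distance at least
`|t|`, so `(t, t, t)` has distance at least `1` from `L_odd`.
-/

section TaxicabDistance

variable {K : Type*} [Field K] [LinearOrder K] [IsStrictOrderedRing K] {t : K}

theorem one_sub_abs_le_abs_sub_intCast {m : ℤ} (hm : m ≠ 0) : 1 - |t| ≤ |t - m| := by
  have one_le_abs : (1 : K) ≤ |(m : K)| := by exact_mod_cast Int.one_le_abs hm
  calc 1 - |t| ≤ |(m : K)| - |t| := by gcongr
    _ ≤ |m - t| := abs_sub_abs_le_abs_sub _ _
    _ = |t - m| := abs_sub_comm _ _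

theorem abs_le_abs_sub_intCast (ht : |t| ≤ 1 / 2) (m : ℤ) : |t| ≤ |t - m| := by
  rcases eq_or_ne m 0 with rfl | hm
  · simp
  · linarith [one_sub_abs_le_abs_sub_intCast (t := t) hm]

theorem one_le_sum_abs_sub_intCast {ι : Type*} [Fintype ι] [Nontrivial ι] (ht : |t| ≤ 1 / 2)
    {u : ι → ℤ} (hu : u ≠ 0) : 1 ≤ ∑ i, |t - u i| := by
  obtain ⟨i, hi⟩ := Function.ne_iff.mp hu
  obtain ⟨j, hji⟩ := exists_ne i
  calc 1 = (1 - |t|) + |t| := by ring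
    _ ≤ |t - u i| + |t - u j| :=
      add_le_add (one_sub_abs_le_abs_sub_intCast hi) (abs_le_abs_sub_intCast ht _)
    _ ≤ ∑ k, |t - u k| :=
      Finset.add_le_sum (fun k _ ↦ abs_nonneg (t - u k)) (Finset.mem_univ i) (Finset.mem_univ j)
        hji.symm

theorem abs_intCast_div_le_half {a b : ℤ} (h : 2 * |a| ≤ b) : |(a : K) / b| ≤ 1 / 2 := by
  have b_nonneg : (0 : K) ≤ b := by exact_mod_cast (by positivity : 0 ≤ 2 * |a|).trans h
  have two_mul_le : 2 * |(a : K)| ≤ b := by exact_mod_cast h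
  rw [abs_div, abs_of_nonneg b_nonneg]
  exact div_le_of_le_mul₀ b_nonneg (by norm_num) (by linarith)

theorem one_le_abs_sub_add_abs_sub_add_abs_sub_of_odd (ht : |t| ≤ 1 / 2) {u₁ u₂ u₃ : ℤ}
    (hu : Odd (u₁ + u₂ + u₃)) : 1 ≤ |t - u₁| + |t - u₂| + |t - u₃| := by
  have ne_zero : ![u₁, u₂, u₃] ≠ 0 := by
    intro h
    simp_all
  simpa [Fin.sum_univ_three] using one_le_sum_abs_sub_intCast ht ne_zero

end TaxicabDistance

section OddMultiplier

theorem int_ne_zero_of_odd {n : ℤ} (hn : Odd n) : n ≠ 0 := by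
  rintro rfl
  exact Int.not_odd_zero hn

theorem exists_pos_isCoprime_mul_modEq {m p c : ℤ} (hm : m ≠ 0) (hp : IsCoprime p m)
    (hc : IsCoprime c m) : ∃ l, 0 < l ∧ IsCoprime l m ∧ l * p ≡ c [ZMOD m] := by
  obtain ⟨y, k, hy⟩ := hp
  set l := y * c % m + |m|
  have l_pos : 0 < l := add_pos_of_nonneg_of_pos (Int.emod_nonneg _ hm) (abs_pos.mpr hm)
  have l_modEq : l ≡ y * c [ZMOD m] := by
    simpa using (Int.mod_modEq (y * c) m).add ((dvd_abs m m).mpr dvd_rfl).modEq_zero_int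
  have mul_modEq : l * p ≡ c [ZMOD m] := by
    calc l * p ≡ y * c * p [ZMOD m] := l_modEq.mul_right p
      _ ≡ c [ZMOD m] := Int.modEq_iff_dvd.mpr ⟨k * c, by linear_combination -c * hy⟩
  have isCoprime_mul : IsCoprime (l * p) m := by
    obtain ⟨j, hj⟩ := mul_modEq.dvd
    rw [show l * p = c + m * -j by linear_combination -hj]
    exact hc.add_mul_left_left _
  exact ⟨l, l_pos, isCoprime_mul.of_mul_left_left, mul_modEq⟩

theorem exists_pos_isCoprime_mul_eq_add_two {p q : ℤ} (hp_odd : Odd p) (hq_odd : Odd q)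
    (hpq : IsCoprime p q) :
    ∃ l n, 0 < l ∧ IsCoprime l (2 * q) ∧ Odd n ∧ l * p = q * n + 2 := by
  have isCoprime_p : IsCoprime p (2 * q) :=
    (Int.isCoprime_two_right.mpr hp_odd).mul_right hpq
  have isCoprime_add_two : IsCoprime (q + 2) (2 * q) := by
    refine (Int.isCoprime_two_right.mpr (hq_odd.add_even even_two)).mul_right ?_
    simpa [add_comm] using (Int.isCoprime_two_left.mpr hq_odd).add_mul_left_left 1
  obtain ⟨l, hl_pos, hl, hlp⟩ :=
    exists_pos_isCoprime_mul_modEq (mul_ne_zero two_ne_zero (int_ne_zero_of_odd hq_odd))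
      isCoprime_p isCoprime_add_two
  obtain ⟨k, hk⟩ := hlp.symm.dvd
  exact ⟨l, 2 * k + 1, hl_pos, hl, odd_two_mul_add_one k, by linear_combination hk⟩

theorem exists_pos_isCoprime_mul_div_sub_eq_two_div {K : Type*} [Field K] [CharZero K] {a b : ℤ}
    (ha_odd : Odd a) (hb_odd : Odd b) :
    ∃ l n : ℤ, 0 < l ∧ IsCoprime l (2 * (b / a.gcd b)) ∧ Odd n ∧
      (l * a : K) / b - n = 2 / ((b / a.gcd b : ℤ) : K) := by
  have gcd_pos : 0 < a.gcd b := Int.gcd_pos_of_ne_zero_right a (int_ne_zero_of_odd hb_odd)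
  set g : ℤ := (a.gcd b : ℤ)
  set p := a / g
  set q := b / g
  have hg : 0 < g := Int.natCast_pos.mpr gcd_pos
  have ha_eq : a = g * p := (Int.mul_ediv_cancel' (Int.gcd_dvd_left a b)).symm
  have hb_eq : b = g * q := (Int.mul_ediv_cancel' (Int.gcd_dvd_right a b)).symm
  have hpq : IsCoprime p q := Int.isCoprime_iff_gcd_eq_one.mpr (Int.gcd_ediv_gcd_ediv_gcd gcd_pos)
  have hp_odd : Odd p := (Int.odd_mul.mp (ha_eq ▸ ha_odd)).2
  have hq_odd : Odd q := (Int.odd_mul.mp (hb_eq ▸ hb_odd)).2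
  obtain ⟨l, n, hl_pos, hl, hn, hln⟩ := exists_pos_isCoprime_mul_eq_add_two hp_odd hq_odd hpq
  refine ⟨l, n, hl_pos, hl, hn, ?_⟩
  have hg0 : (g : K) ≠ 0 := Int.cast_ne_zero.mpr hg.ne'
  have hq0 : (q : K) ≠ 0 := Int.cast_ne_zero.mpr (int_ne_zero_of_odd hq_odd)
  have hln_cast : (l * p : K) = q * n + 2 := by exact_mod_cast hln
  calc (l * a : K) / b - n = l * (g * p) / (g * q) - n := by rw [ha_eq, hb_eq]; push_cast; rfl
    _ = (l * p - q * n) / q := by field_simp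
    _ = 2 / q := by rw [hln_cast, add_sub_cancel_left]

end OddMultiplier

section TrinomialInvariants

theorem lt_ediv_gcd_of_mul_abs_lt {c a b : ℤ} (ha : a ≠ 0) (hc : 0 ≤ c) (h : c * |a| < b) :
    c < b / a.gcd b := by
  have gcd_pos : (0 : ℤ) < a.gcd b := Int.natCast_pos.mpr (Int.gcd_pos_of_ne_zero_left b ha)
  have gcd_le : (a.gcd b : ℤ) ≤ |a| :=
    Int.le_of_dvd (abs_pos.mpr ha) ((dvd_abs _ _).mpr (Int.gcd_dvd_left a b))
  rw [Int.lt_ediv_iff_of_dvd_of_pos gcd_pos (Int.gcd_dvd_right a b), mul_comm]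
  exact (mul_le_mul_of_nonneg_left gcd_le hc).trans_lt h

theorem six_mul_abs_sub_lt_sq_sub_mul_add_sq {R : Type*} [CommRing R] [LinearOrder R]
    [IsStrictOrderedRing R] {x y : R} (h : 48 < (x + y) ^ 2) :
    6 * |x - y| < x ^ 2 - x * y + y ^ 2 := by
  have sum_of_squares : 4 * (x ^ 2 - x * y + y ^ 2 - 6 * |x - y|) =
      ((x + y) ^ 2 - 48) + 3 * (|x - y| - 4) ^ 2 := by
    linear_combination -3 * sq_abs (x - y)
  linarith [sq_nonneg (|x - y| - 4)]

theorem odd_sq_sub_mul_add_sq {x y : ℤ} (h : Odd (x + y)) : Odd (x ^ 2 - x * y + y ^ 2) := by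
  have even_mul : Even (x * y) := by grind
  rw [show x ^ 2 - x * y + y ^ 2 = (x + y) ^ 2 - 3 * (x * y) by ring]
  exact h.pow.sub_even (even_mul.mul_left 3)

end TrinomialInvariants

theorem stmt_14_general (a1 a2 d α lam a lamh : ℤ) (hd : d = a1 + a2) (hd7 : 7 ≤ |d|)
    (hodd : Odd d) (hα : α = 2 * a1 - d) (hlam : lam = a1 ^ 2 - a1 * a2 + a2 ^ 2)
    (ha' : a = (Int.gcd α lam : ℤ)) (hlamh : lamh = lam / a) :
    6 < lamh ∧
    ∃ l' : ℤ, 1 ≤ l' ∧ Int.gcd l' (2 * lamh) = 1 ∧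
      (¬ ∃ u1 u2 u3 : ℤ, Odd (u1 + u2 + u3) ∧
        |(α : ℝ) / (lam : ℝ) - (u1 : ℝ)| + |(α : ℝ) / (lam : ℝ) - (u2 : ℝ)| +
          |(α : ℝ) / (lam : ℝ) - (u3 : ℝ)| < 1) ∧
      (∃ u1 u2 u3 : ℤ, Odd (u1 + u2 + u3) ∧
        |(l' * α : ℝ) / (lam : ℝ) - (u1 : ℝ)| + |(l' * α : ℝ) / (lam : ℝ) - (u2 : ℝ)| +
          |(l' * α : ℝ) / (lam : ℝ) - (u3 : ℝ)| < 1 ∧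
        |(l' * α : ℝ) / (lam : ℝ) - (u1 : ℝ)| + |(l' * α : ℝ) / (lam : ℝ) - (u2 : ℝ)| +
          |(l' * α : ℝ) / (lam : ℝ) - (u3 : ℝ)| = 6 / (lamh : ℝ)) := by
  have hα_odd : Odd α := hα ▸ (even_two_mul a1).sub_odd hodd
  have hlam_odd : Odd lam := hlam ▸ odd_sq_sub_mul_add_sq (hd ▸ hodd)
  have hd_sq : 48 < d ^ 2 := by nlinarith [sq_abs d]
  have six_mul_abs_lt : 6 * |α| < lam := by
    rw [hlam, show α = a1 - a2 by linarith]
    exact six_mul_abs_sub_lt_sq_sub_mul_add_sq (hd ▸ hd_sq)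
  obtain rfl : lamh = lam / α.gcd lam := by rw [hlamh, ha']
  have six_lt : 6 < lam / α.gcd lam :=
    lt_ediv_gcd_of_mul_abs_lt (int_ne_zero_of_odd hα_odd) (by norm_num) six_mul_abs_lt
  obtain ⟨l', n, hl_pos, hl, hn, sub_eq⟩ :=
    exists_pos_isCoprime_mul_div_sub_eq_two_div (K := ℝ) hα_odd hlam_odd
  have abs_le_half : |(α : ℝ) / lam| ≤ 1 / 2 :=
    abs_intCast_div_le_half (by linarith [abs_nonneg α])
  refine ⟨six_lt, l', hl_pos, Int.isCoprime_iff_gcd_eq_one.mp hl, ?_,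
    n, n, n, (hn.add_odd hn).add_odd hn, ?_⟩
  · rintro ⟨u1, u2, u3, hu, hlt⟩
    exact hlt.not_ge (one_le_abs_sub_add_abs_sub_add_abs_sub_of_odd abs_le_half hu)
  · have six_lt_cast : (6 : ℝ) < (lam / α.gcd lam : ℤ) := by exact_mod_cast six_lt
    have sum_eq (x : ℝ) (hx : 0 < x) : |2 / x| + |2 / x| + |2 / x| = 6 / x := by
      rw [abs_of_pos (by positivity)]
      ring
    rw [sub_eq, sum_eq _ (by linarith), div_lt_one (by linarith)]
    exact ⟨six_lt_cast, rfl⟩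

/-- Theorem 4.5, odd degree case: for a symmetric trinomial of odd degree d ≥ 7,
λ_h > 6 and there is l' coprime to 2λ_h with Δ_{h,1}(l') = (6/λ_h, 1). -/
theorem stmt_14 (a1 a2 d α lam a lamh : ℤ) (hd : d = a1 + a2)
    (ha2 : 1 ≤ a2) (h2a1 : 2 * a1 > d) (hd7 : 7 ≤ d) (hodd : Odd d)
    (hα : α = 2 * a1 - d) (hlam : lam = a1 ^ 2 - a1 * a2 + a2 ^ 2)
    (ha' : a = (Int.gcd α lam : ℤ)) (hlamh : lamh = lam / a) :
    6 < lamh ∧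
    ∃ l' : ℤ, 1 ≤ l' ∧ Int.gcd l' (2 * lamh) = 1 ∧
      (¬ ∃ u1 u2 u3 : ℤ, Odd (u1 + u2 + u3) ∧
        |(α : ℝ) / (lam : ℝ) - (u1 : ℝ)| + |(α : ℝ) / (lam : ℝ) - (u2 : ℝ)| +
          |(α : ℝ) / (lam : ℝ) - (u3 : ℝ)| < 1) ∧
      (∃ u1 u2 u3 : ℤ, Odd (u1 + u2 + u3) ∧
        |(l' * α : ℝ) / (lam : ℝ) - (u1 : ℝ)| + |(l' * α : ℝ) / (lam : ℝ) - (u2 : ℝ)| +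
          |(l' * α : ℝ) / (lam : ℝ) - (u3 : ℝ)| < 1 ∧
        |(l' * α : ℝ) / (lam : ℝ) - (u1 : ℝ)| + |(l' * α : ℝ) / (lam : ℝ) - (u2 : ℝ)| +
          |(l' * α : ℝ) / (lam : ℝ) - (u3 : ℝ)| = 6 / (lamh : ℝ)) :=
  stmt_14_general a1 a2 d α lam a lamh hd (hd7.trans (le_abs_self d)) hodd hα hlam ha' hlamh
end

section
/- Let h = x^{a1}y^{a2} + y^{a1}z^{a2} + z^{a1}x^{a2} be a symmetric trinomial of even degree d = a1 + a2 ≥ 4 with a1 > d/2 and a2 ≥ 1. Set α = 2a1 − d, λ = a1² − a1·a2 + a2², a = gcd(α, λ) and λ_h = λ/a, and suppose λ_h is even. Then there exists an integer l' ≥ 1 with gcd(l', 2λ_h) = 1 such that: (a) there is no u ∈ L_odd with |α/λ − u1| + |α/λ − u2| + |α/λ − u3| < 1; and (b) there exists u ∈ L_odd with |l'·α/λ − u1| + |l'·α/λ − u2| + |l'·α/λ − u3| < 1, and the value of this sum is 3/λ_h. -/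
/-!
On the diagonal, `Td((t, t, t), u) < 1` forces `u` onto the diagonal as well: any two coordinates
of `u` are integers at distance less than `1`. So `u = (m, m, m)` with `m` odd, and the question is
whether `t` lies within `1/3` of an odd integer. This fails for `t = α / λ ∈ [0, 2/3]`. Writing
`α / λ = A / L` in lowest terms with `L` even, `A` is invertible modulo `2L` and so is `1 + L`;
solving `l' A ≡ 1 + L` modulo `2L` puts `l' A / L` at distance exactly `1 / L` from an odd integer.
-/

section Taxicab

variable {K : Type*} [CommRing K] [LinearOrder K] [IsStrictOrderedRing K] {t : K}

theorem eq_of_abs_sub_add_abs_sub_lt_one {u v : ℤ} (h : |t - u| + |t - v| < 1) : u = v := by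
  have huv : |(u : K) - v| < 1 :=
    (abs_sub_le (u : K) t v).trans_lt (by rwa [abs_sub_comm (u : K) t])
  rw [← sub_eq_zero, ← Int.abs_lt_one_iff]
  exact_mod_cast huv

variable {ι : Type*} [Fintype ι] {u : ι → ℤ}

theorem eq_of_sum_abs_sub_lt_one (h : ∑ i, |t - u i| < 1) (i j : ι) : u i = u j := by
  by_contra hne
  refine hne (eq_of_abs_sub_add_abs_sub_lt_one (t := t) (lt_of_le_of_lt ?_ h))
  exact Finset.add_le_sum (f := fun i ↦ |t - u i|) (fun k _ ↦ abs_nonneg _)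
    (Finset.mem_univ i) (Finset.mem_univ j) (ne_of_apply_ne u hne)

theorem one_le_mul_abs_sub_of_odd {n : K} (hn : 1 ≤ n) (ht₀ : 0 ≤ t) (ht₁ : n * t ≤ n - 1)
    {m : ℤ} (hm : Odd m) : 1 ≤ n * |t - m| := by
  have hn₀ : 0 ≤ n := zero_le_one.trans hn
  have hm₀ : m ≠ 0 := by rintro rfl; simp at hm
  rcases lt_or_gt_of_ne hm₀ with hneg | hpos
  · have hm' : (m : K) ≤ -1 := by exact_mod_cast Int.le_sub_one_of_lt hneg
    calc 1 ≤ n * 1 := by rwa [mul_one]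
      _ ≤ n * |t - m| := mul_le_mul_of_nonneg_left (le_abs.2 (.inl (by linarith))) hn₀
  · have hm' : (1 : K) ≤ m := by exact_mod_cast hpos
    calc 1 ≤ n * (1 - t) := by linarith
      _ ≤ n * |t - m| := mul_le_mul_of_nonneg_left (le_abs.2 (.inr (by linarith))) hn₀

theorem one_le_sum_abs_sub_of_odd_sum (hu : Odd (∑ i, u i)) (ht₀ : 0 ≤ t)
    (ht₁ : Fintype.card ι * t ≤ Fintype.card ι - 1) : 1 ≤ ∑ i, |t - u i| := by
  by_contra! h
  obtain ⟨i₀⟩ : Nonempty ι := by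
    by_contra hι
    simp [not_nonempty_iff.1 hι] at hu
  have hconst (i : ι) : u i = u i₀ := eq_of_sum_abs_sub_lt_one h i i₀
  simp only [hconst, Finset.sum_const, Finset.card_univ, nsmul_eq_mul] at hu h
  have hcard : (1 : K) ≤ Fintype.card ι := by exact_mod_cast Fintype.card_pos_iff.2 ⟨i₀⟩
  exact h.not_ge (one_le_mul_abs_sub_of_odd hcard ht₀ ht₁ (Int.odd_mul.1 hu).2)

theorem one_le_abs_sub_add_add_of_odd_add {u₁ u₂ u₃ : ℤ} (hu : Odd (u₁ + u₂ + u₃))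
    (ht₀ : 0 ≤ t) (ht₁ : 3 * t ≤ 2) : 1 ≤ |t - u₁| + |t - u₂| + |t - u₃| := by
  have hle : (Fintype.card (Fin 3) : K) * t ≤ Fintype.card (Fin 3) - 1 := by
    rw [Fintype.card_fin, Nat.cast_ofNat]
    linarith
  simpa [Fin.sum_univ_three] using
    one_le_sum_abs_sub_of_odd_sum (u := ![u₁, u₂, u₃]) (by simpa [Fin.sum_univ_three]) ht₀ hle

end Taxicab

theorem isCoprime_two_mul_right_of_even {R : Type*} [CommSemiring R] {a n : R}
    (h : IsCoprime a n) (hn : Even n) : IsCoprime a (2 * n) :=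
  (h.of_isCoprime_of_dvd_right hn.two_dvd).mul_right h

theorem exists_one_le_mul_modEq {a n : ℤ} (h : IsCoprime a n) (hn : 0 < n) (c : ℤ) :
    ∃ l : ℤ, 1 ≤ l ∧ l * a ≡ c [ZMOD n] := by
  obtain ⟨x, y, hxy⟩ := h
  refine ⟨c * x % n + n, by linarith [Int.emod_nonneg (c * x) hn.ne'], ?_⟩
  calc (c * x % n + n) * a ≡ c * x * a [ZMOD n] :=
        ((Int.add_modEq_right).trans (Int.mod_modEq _ _)).mul_right a
    _ ≡ c [ZMOD n] := (Int.modEq_iff_dvd).2 ⟨c * y, by linear_combination -c * hxy⟩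

theorem exists_isCoprime_mul_eq_one_add_mul_odd {a n : ℤ} (h : IsCoprime a n) (hn : 0 < n)
    (hn_even : Even n) :
    ∃ l m : ℤ, 1 ≤ l ∧ IsCoprime l (2 * n) ∧ Odd m ∧ l * a = 1 + n * m := by
  obtain ⟨l, hl, hmod⟩ := exists_one_le_mul_modEq (isCoprime_two_mul_right_of_even h hn_even)
    (by positivity) (1 + n)
  obtain ⟨k, hk⟩ := hmod.symm.dvd
  have hla : l * a = 1 + n * (2 * k + 1) := by linear_combination hk
  have hln : IsCoprime l n := ⟨a, -(2 * k + 1), by linear_combination hla⟩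
  exact ⟨l, 2 * k + 1, hl, isCoprime_two_mul_right_of_even hln hn_even, odd_two_mul_add_one k, hla⟩

theorem exists_isCoprime_abs_div_sub_odd_eq {K : Type*} [Field K] [LinearOrder K]
    [IsStrictOrderedRing K] {a n : ℤ} (h : IsCoprime a n) (hn : 0 < n) (hn_even : Even n) :
    ∃ l m : ℤ, 1 ≤ l ∧ IsCoprime l (2 * n) ∧ Odd m ∧ |(l * a : K) / n - m| = 1 / n := by
  obtain ⟨l, m, hl, hcop, hm, hlm⟩ := exists_isCoprime_mul_eq_one_add_mul_odd h hn hn_even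
  refine ⟨l, m, hl, hcop, hm, ?_⟩
  have hn' : (0 : K) < n := by exact_mod_cast hn
  have hlm' : (l * a : K) = 1 + n * m := by exact_mod_cast hlm
  have hdiff : (l * a : K) / n - m = 1 / n := by
    rw [hlm', add_div, mul_div_cancel_left₀ _ hn'.ne', add_sub_cancel_right]
  rw [hdiff, abs_of_pos (one_div_pos.2 hn')]

theorem intCast_div_gcd_div_intCast_div_gcd {K : Type*} [DivisionRing K] [CharZero K] (a b : ℤ) :
    ((a / (Int.gcd a b : ℤ) : ℤ) : K) / (b / (Int.gcd a b : ℤ) : ℤ) = a / b := by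
  rcases eq_or_ne ((Int.gcd a b : ℤ) : K) 0 with hgcd | hgcd
  · have hb : b = 0 := (Int.gcd_eq_zero_iff.1 (by exact_mod_cast hgcd)).2
    simp [hb]
  · rw [Int.cast_div (Int.gcd_dvd_left a b) hgcd, Int.cast_div (Int.gcd_dvd_right a b) hgcd,
      div_div_div_cancel_right₀ hgcd]

theorem four_le_div_gcd_of_even {a b : ℤ} (ha : 0 < a) (hle : 3 * a ≤ 2 * b) (hne : b ≠ 2 * a)
    (heven : Even (b / (Int.gcd a b : ℤ))) : 4 ≤ b / (Int.gcd a b : ℤ) := by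
  obtain ⟨k, hk⟩ := heven
  have hgcd : 0 < (Int.gcd a b : ℤ) := mod_cast Int.gcd_pos_of_ne_zero_left b ha.ne'
  have hb : b = (k + k) * (Int.gcd a b : ℤ) := by
    rw [← hk, Int.ediv_mul_cancel (Int.gcd_dvd_right a b)]
  obtain ⟨c, hac⟩ := Int.gcd_dvd_left a b
  generalize (Int.gcd a b : ℤ) = g at *
  subst hac hb
  have hc : 0 < c := pos_of_mul_pos_right ha hgcd.le
  have hck : 3 * c ≤ 2 * (k + k) := le_of_mul_le_mul_left (by linarith) hgcd
  have hck_ne : k ≠ c := by rintro rfl; exact hne (by ring)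
  lia

theorem three_mul_sub_le_sq_sub_mul_add_sq {R : Type*} [CommRing R] [LinearOrder R]
    [IsStrictOrderedRing R] {a b : R} (hb : 1 ≤ b) (hab : b ≤ a) :
    3 * (a - b) ≤ a ^ 2 - a * b + b ^ 2 := by
  nlinarith [sq_nonneg (a - b - 1), mul_nonneg (sub_nonneg.2 hb) (sub_nonneg.2 hab)]

theorem stmt_15_general (α lam lamh : ℤ) (hα : 0 < α) (hle : 3 * α ≤ 2 * lam)
    (hne : lam ≠ 2 * α) (hlamh : lamh = lam / (Int.gcd α lam : ℤ)) (hlamheven : Even lamh) :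
    ∃ l' : ℤ, 1 ≤ l' ∧ Int.gcd l' (2 * lamh) = 1 ∧
      (¬ ∃ u1 u2 u3 : ℤ, Odd (u1 + u2 + u3) ∧
        |(α : ℝ) / (lam : ℝ) - (u1 : ℝ)| + |(α : ℝ) / (lam : ℝ) - (u2 : ℝ)| +
          |(α : ℝ) / (lam : ℝ) - (u3 : ℝ)| < 1) ∧
      (∃ u1 u2 u3 : ℤ, Odd (u1 + u2 + u3) ∧
        |(l' * α : ℝ) / (lam : ℝ) - (u1 : ℝ)| + |(l' * α : ℝ) / (lam : ℝ) - (u2 : ℝ)| +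
          |(l' * α : ℝ) / (lam : ℝ) - (u3 : ℝ)| < 1 ∧
        |(l' * α : ℝ) / (lam : ℝ) - (u1 : ℝ)| + |(l' * α : ℝ) / (lam : ℝ) - (u2 : ℝ)| +
          |(l' * α : ℝ) / (lam : ℝ) - (u3 : ℝ)| = 3 / (lamh : ℝ)) := by
  have hlamh4 : 4 ≤ lamh := hlamh ▸ four_le_div_gcd_of_even hα hle hne (hlamh ▸ hlamheven)
  have hcop : IsCoprime (α / (Int.gcd α lam : ℤ)) lamh := hlamh ▸ Int.isCoprime_iff_gcd_eq_one.2
    (Int.gcd_div_gcd_div_gcd (Int.gcd_pos_of_ne_zero_left lam hα.ne'))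
  obtain ⟨l, m, hl, hlcop, hm, hdist⟩ :=
    exists_isCoprime_abs_div_sub_odd_eq (K := ℝ) hcop (by lia) hlamheven
  have hreduce : ((α / (Int.gcd α lam : ℤ) : ℤ) : ℝ) / lamh = α / lam :=
    hlamh ▸ intCast_div_gcd_div_intCast_div_gcd α lam
  rw [mul_div_assoc, hreduce, ← mul_div_assoc] at hdist
  have hlamh4_real : (4 : ℝ) ≤ lamh := by exact_mod_cast hlamh4
  have hlam : (0 : ℝ) < lam := by exact_mod_cast (by lia : 0 < lam)
  have hnonneg : 0 ≤ (α : ℝ) / lam := div_nonneg (by exact_mod_cast hα.le) hlam.le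
  have hthree : 3 * ((α : ℝ) / lam) ≤ 2 := by
    rw [← mul_div_assoc, div_le_iff₀ hlam]
    exact_mod_cast hle
  have hsum : (1 : ℝ) / lamh + 1 / lamh + 1 / lamh = 3 / lamh := by ring
  refine ⟨l, hl, Int.isCoprime_iff_gcd_eq_one.1 hlcop, ?_, m, m, m,
    (hm.add_odd hm).add_odd hm, ?_⟩
  · rintro ⟨u1, u2, u3, hu, hlt⟩
    exact hlt.not_ge (one_le_abs_sub_add_add_of_odd_add hu hnonneg hthree)
  · rw [hdist, hsum, div_lt_one (by linarith)]
    exact ⟨by linarith, rfl⟩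

/-- Theorem 4.5, case d even and λ_h even: for a symmetric trinomial of even degree d ≥ 4
with λ_h even, there is l' coprime to 2λ_h with Δ_{h,1}(l') = (3/λ_h, 1). -/
theorem stmt_15 (a1 a2 d α lam a lamh : ℤ) (hd : d = a1 + a2)
    (ha2 : 1 ≤ a2) (h2a1 : 2 * a1 > d) (hd4 : 4 ≤ d) (heven : Even d)
    (hα : α = 2 * a1 - d) (hlam : lam = a1 ^ 2 - a1 * a2 + a2 ^ 2)
    (ha' : a = (Int.gcd α lam : ℤ)) (hlamh : lamh = lam / a) (hlamheven : Even lamh) :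
    ∃ l' : ℤ, 1 ≤ l' ∧ Int.gcd l' (2 * lamh) = 1 ∧
      (¬ ∃ u1 u2 u3 : ℤ, Odd (u1 + u2 + u3) ∧
        |(α : ℝ) / (lam : ℝ) - (u1 : ℝ)| + |(α : ℝ) / (lam : ℝ) - (u2 : ℝ)| +
          |(α : ℝ) / (lam : ℝ) - (u3 : ℝ)| < 1) ∧
      (∃ u1 u2 u3 : ℤ, Odd (u1 + u2 + u3) ∧
        |(l' * α : ℝ) / (lam : ℝ) - (u1 : ℝ)| + |(l' * α : ℝ) / (lam : ℝ) - (u2 : ℝ)| +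
          |(l' * α : ℝ) / (lam : ℝ) - (u3 : ℝ)| < 1 ∧
        |(l' * α : ℝ) / (lam : ℝ) - (u1 : ℝ)| + |(l' * α : ℝ) / (lam : ℝ) - (u2 : ℝ)| +
          |(l' * α : ℝ) / (lam : ℝ) - (u3 : ℝ)| = 3 / (lamh : ℝ)) := by
  have hα0 : 0 < α := by lia
  have hle : 3 * α ≤ lam := by
    linarith [three_mul_sub_le_sq_sub_mul_add_sq ha2 (by lia : a2 ≤ a1)]
  exact stmt_15_general α lam lamh hα0 (by lia) (by lia) (ha' ▸ hlamh) hlamheven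
end

section
/- Let d ≥ 4 be an even integer, set α = d − 2 and λ = (d−1)(d−2) + 1 = d² − 3d + 3, and let m ≥ 2 be the integer with 3·2^{m−2} ≤ d − 1 < 3·2^{m−1}. Then, setting l = λ + 2: the least integer s ≥ 0 for which there exists u ∈ L_odd with |l^s·α/λ − u1| + |l^s·α/λ − u2| + |l^s·α/λ − u3| < 1 is s = m, and for s = m the value of this sum equals 3·|1 − 2^m·α/λ|. -/
/-!
If `l ≡ ±2 [ZMOD λ]` and `α` is even, then `l ^ s * (α / λ)` differs from `± 2 ^ s * (α / λ)` by an
even integer, and translating a diagonal point by an even integer preserves its taxicab distances to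
`L_odd`. A point of `L_odd` at distance less than `1` from `(x, x, x)` must itself be diagonal, say
`(u, u, u)` with `u` odd, so `|x - u| < 1 / 3`. When `|x| ≤ 2 / 3` this is impossible, because
`u ≠ 0`; when `2 / 3 < |x| < 4 / 3` the choice `u = ± 1` works. Since
`1 / d < α / λ < 1 / (d - 1)`, the bounds `3 * 2 ^ (m - 2) ≤ d - 1 < 3 * 2 ^ (m - 1)` make `m` the
first exponent with `2 / 3 < 2 ^ m * (α / λ)`.
-/

section Taxicab

variable {K : Type*} [CommRing K] [LinearOrder K] [IsStrictOrderedRing K]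

theorem eq_of_abs_sub_add_abs_sub_lt_one_s18 {x : K} {a b : ℤ} (h : |x - a| + |x - b| < 1) :
    a = b := by
  have hab : |((a - b : ℤ) : K)| < 1 := by
    rw [Int.cast_sub]
    calc |(a : K) - b| ≤ |a - x| + |x - b| := abs_sub_le _ _ _
      _ = |x - a| + |x - b| := by rw [abs_sub_comm]
      _ < 1 := h
  exact sub_eq_zero.mp (Int.abs_lt_one_iff.mp (by exact_mod_cast hab))

theorem one_sub_abs_le_abs_sub_intCast_s18 (x : K) {u : ℤ} (hu : u ≠ 0) : 1 - |x| ≤ |x - u| := by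
  have one_le_abs : (1 : K) ≤ |(u : K)| := by exact_mod_cast Int.one_le_abs hu
  calc 1 - |x| ≤ |(u : K)| - |x| := by gcongr
    _ ≤ |u - x| := abs_sub_abs_le_abs_sub _ _
    _ = |x - u| := abs_sub_comm _ _

theorem one_le_sum_abs_sub_of_odd {x : K} (hx : 3 * |x| ≤ 2) {u₁ u₂ u₃ : ℤ}
    (hodd : Odd (u₁ + u₂ + u₃)) : 1 ≤ |x - u₁| + |x - u₂| + |x - u₃| := by
  by_contra! hlt
  obtain rfl : u₁ = u₂ :=
    eq_of_abs_sub_add_abs_sub_lt_one_s18 (x := x) (by linarith [abs_nonneg (x - u₃)])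
  obtain rfl : u₁ = u₃ :=
    eq_of_abs_sub_add_abs_sub_lt_one_s18 (x := x) (by linarith [abs_nonneg (x - u₁)])
  have hu : u₁ ≠ 0 := by
    rintro rfl
    simp at hodd
  linarith [one_sub_abs_le_abs_sub_intCast_s18 x hu]

theorem one_le_sum_abs_add_even_sub_of_odd {x : K} (hx : 3 * |x| ≤ 2) {k : ℤ} (hk : Even k)
    {u₁ u₂ u₃ : ℤ} (hodd : Odd (u₁ + u₂ + u₃)) :
    1 ≤ |x + k - u₁| + |x + k - u₂| + |x + k - u₃| := by
  have hodd' : Odd ((u₁ - k) + (u₂ - k) + (u₃ - k)) := by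
    rw [show (u₁ - k) + (u₂ - k) + (u₃ - k) = (u₁ + u₂ + u₃) - 3 * k by ring]
    exact hodd.sub_even (hk.mul_left 3)
  simpa only [Int.cast_sub, sub_sub_eq_add_sub] using one_le_sum_abs_sub_of_odd hx hodd'

theorem exists_odd_abs_add_even_sub_eq (x : K) {k : ℤ} (hk : Even k) :
    ∃ u : ℤ, Odd u ∧ |x + k - u| = |(1 - |x|)| := by
  rcases le_total 0 x with hx | hx
  · refine ⟨k + 1, hk.add_one, ?_⟩
    rw [abs_of_nonneg hx, abs_sub_comm 1]
    push_cast
    ring_nf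
  · refine ⟨k - 1, hk.sub_odd odd_one, ?_⟩
    rw [abs_of_nonpos hx]
    push_cast
    ring_nf

end Taxicab

section EvenNumerator

variable {K : Type*} [Field K]

theorem exists_even_pow_mul_div_eq [CharZero K] {l b α lam : ℤ} (hlam : lam ≠ 0)
    (hl : l ≡ b [ZMOD lam]) (hα : Even α) (s : ℕ) :
    ∃ k : ℤ, Even k ∧ (l : K) ^ s * (α / lam) = (b : K) ^ s * (α / lam) + k := by
  obtain ⟨q, hq⟩ : lam ∣ l ^ s - b ^ s := (hl.pow s).symm.dvd
  have hq' : (l : K) ^ s = (b : K) ^ s + lam * q := by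
    exact_mod_cast eq_add_of_sub_eq' hq
  have hlam' : (lam : K) ≠ 0 := Int.cast_ne_zero.mpr hlam
  refine ⟨q * α, hα.mul_left q, ?_⟩
  rw [hq']
  push_cast
  field_simp

theorem exists_abs_eq_even_pow_mul_div_eq [LinearOrder K] [IsStrictOrderedRing K]
    {l α lam : ℤ} (hlam : 0 < lam) (hl : l ≡ 2 [ZMOD lam] ∨ l ≡ -2 [ZMOD lam])
    (hα : Even α) (hα₀ : 0 ≤ α) (s : ℕ) :
    ∃ (x : K) (k : ℤ), |x| = 2 ^ s * (α / lam) ∧ Even k ∧ (l : K) ^ s * (α / lam) = x + k := by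
  obtain ⟨b, hb, hlb⟩ : ∃ b : ℤ, |b| = 2 ∧ l ≡ b [ZMOD lam] :=
    hl.elim (⟨2, rfl, ·⟩) (⟨-2, rfl, ·⟩)
  obtain ⟨k, hk, heq⟩ := exists_even_pow_mul_div_eq (K := K) hlam.ne' hlb hα s
  have hb' : |(b : K)| = 2 := by exact_mod_cast hb
  have hratio : (0 : K) ≤ α / lam :=
    div_nonneg (Int.cast_nonneg hα₀) (Int.cast_nonneg hlam.le)
  exact ⟨b ^ s * (α / lam), k, by rw [abs_mul, abs_pow, hb', abs_of_nonneg hratio], hk, heq⟩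

end EvenNumerator

section KleinRatio

variable {K : Type*} [Field K] [LinearOrder K] [IsStrictOrderedRing K]

theorem mul_klein_ratio_lt_one {q d : K} (hd : 2 ≤ d) (hq : q ≤ d - 1) :
    q * ((d - 2) / ((d - 1) * (d - 2) + 1)) < 1 := by
  have hmul : q * (d - 2) ≤ (d - 1) * (d - 2) :=
    mul_le_mul_of_nonneg_right hq (sub_nonneg.mpr hd)
  have hden : 0 < (d - 1) * (d - 2) + 1 := by nlinarith
  rw [← mul_div_assoc, div_lt_one hden]
  linarith

theorem one_lt_mul_klein_ratio {q d : K} (hd : 3 < d) (hq : d ≤ q) :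
    1 < q * ((d - 2) / ((d - 1) * (d - 2) + 1)) := by
  have hmul : d * (d - 2) ≤ q * (d - 2) := mul_le_mul_of_nonneg_right hq (by linarith)
  have hden : 0 < (d - 1) * (d - 2) + 1 := by nlinarith
  rw [← mul_div_assoc, one_lt_div hden]
  linarith

theorem klein_ratio_threshold {d : ℤ} {n : ℕ} (hlow : 3 * 2 ^ n ≤ d - 1)
    (hhigh : d - 1 < 3 * 2 ^ (n + 1)) :
    3 * (2 ^ (n + 1) * (((d : K) - 2) / ((d - 1) * (d - 2) + 1))) < 2 ∧
      2 < 3 * (2 ^ (n + 2) * (((d : K) - 2) / ((d - 1) * (d - 2) + 1))) := by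
  have hpow : (1 : ℤ) ≤ 2 ^ n := one_le_pow₀ one_le_two
  have hd : (3 : K) < d := by exact_mod_cast show 3 < d by linarith
  have hlow' : (3 * 2 ^ n : K) ≤ d - 1 := by exact_mod_cast hlow
  have hhigh' : (d : K) ≤ 3 * 2 ^ (n + 1) := by
    exact_mod_cast show d ≤ 3 * 2 ^ (n + 1) by linarith [Int.add_one_le_iff.mpr hhigh]
  have hlt := mul_klein_ratio_lt_one (by linarith) hlow'
  have hgt := one_lt_mul_klein_ratio hd hhigh'
  constructor <;> rw [pow_succ] <;> linarith

end KleinRatio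

theorem stmt_18_general (d α lam l : ℤ) (heven : Even d)
    (hα : α = d - 2) (hlam : lam = (d - 1) * (d - 2) + 1)
    (hl : l ≡ 2 [ZMOD lam] ∨ l ≡ -2 [ZMOD lam])
    (m : ℕ) (hm : 2 ≤ m)
    (hlow : (3 * 2 ^ (m - 2) : ℤ) ≤ d - 1) (hhigh : d - 1 < (3 * 2 ^ (m - 1) : ℤ)) :
    (∀ s : ℕ, s < m → ¬ ∃ u1 u2 u3 : ℤ, Odd (u1 + u2 + u3) ∧
      |(l : ℝ) ^ s * ((α : ℝ) / (lam : ℝ)) - (u1 : ℝ)| +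
        |(l : ℝ) ^ s * ((α : ℝ) / (lam : ℝ)) - (u2 : ℝ)| +
        |(l : ℝ) ^ s * ((α : ℝ) / (lam : ℝ)) - (u3 : ℝ)| < 1) ∧
    (∃ u1 u2 u3 : ℤ, Odd (u1 + u2 + u3) ∧
      |(l : ℝ) ^ m * ((α : ℝ) / (lam : ℝ)) - (u1 : ℝ)| +
        |(l : ℝ) ^ m * ((α : ℝ) / (lam : ℝ)) - (u2 : ℝ)| +
        |(l : ℝ) ^ m * ((α : ℝ) / (lam : ℝ)) - (u3 : ℝ)| < 1 ∧
      |(l : ℝ) ^ m * ((α : ℝ) / (lam : ℝ)) - (u1 : ℝ)| +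
        |(l : ℝ) ^ m * ((α : ℝ) / (lam : ℝ)) - (u2 : ℝ)| +
        |(l : ℝ) ^ m * ((α : ℝ) / (lam : ℝ)) - (u3 : ℝ)| =
        3 * |1 - 2 ^ m * ((α : ℝ) / (lam : ℝ))|) := by
  obtain ⟨n, rfl⟩ := Nat.exists_eq_add_of_le' hm
  obtain ⟨hbelow, habove⟩ : 3 * (2 ^ (n + 1) * ((α : ℝ) / lam)) < 2 ∧
      2 < 3 * (2 ^ (n + 2) * ((α : ℝ) / lam)) := by
    simpa [hα, hlam] using klein_ratio_threshold (K := ℝ) hlow hhigh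
  have hα_nonneg : 0 ≤ α := by linarith [one_le_pow₀ (n := n + 2 - 2) (one_le_two (α := ℤ))]
  have hlam_pos : 0 < lam := by nlinarith
  have hα_even : Even α := hα ▸ heven.sub even_two
  have hshift := exists_abs_eq_even_pow_mul_div_eq (K := ℝ) hlam_pos hl hα_even hα_nonneg
  constructor
  · rintro s hs ⟨u1, u2, u3, hodd, hlt⟩
    obtain ⟨x, k, hx, hk, hxk⟩ := hshift s
    have hpow : (2 : ℝ) ^ s * (α / lam) ≤ 2 ^ (n + 1) * (α / lam) := by
      gcongr
      · exact one_le_two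
      · omega
    rw [hxk] at hlt
    exact hlt.not_ge (one_le_sum_abs_add_even_sub_of_odd (by linarith) hk hodd)
  · obtain ⟨x, k, hx, hk, hxk⟩ := hshift (n + 2)
    obtain ⟨u, hu, hdist⟩ := exists_odd_abs_add_even_sub_eq x hk
    have hclose : 3 * |1 - 2 ^ (n + 2) * ((α : ℝ) / lam)| < 1 := by
      rw [pow_succ] at habove ⊢
      cases abs_cases (1 - 2 ^ (n + 1) * 2 * ((α : ℝ) / lam)) <;> linarith
    rw [hx, ← hxk] at hdist
    exact ⟨u, u, u, (hu.add_odd hu).add_odd hu, by linarith, by linarith⟩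

/-- Corollary 4.7(1) for the Klein d-curve, d even: with 3·2^{m−2} ≤ d−1 < 3·2^{m−1},
Δ_{h,1}(λ + 2) = (3|1 − 2^m·α/λ|, m). -/
theorem stmt_18 (d α lam : ℤ) (hd4 : 4 ≤ d) (heven : Even d)
    (hα : α = d - 2) (hlam : lam = (d - 1) * (d - 2) + 1)
    (hlam' : lam = d ^ 2 - 3 * d + 3)
    (m : ℕ) (hm : 2 ≤ m)
    (hlow : (3 * 2 ^ (m - 2) : ℤ) ≤ d - 1) (hhigh : d - 1 < (3 * 2 ^ (m - 1) : ℤ)) :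
    (∀ s : ℕ, s < m → ¬ ∃ u1 u2 u3 : ℤ, Odd (u1 + u2 + u3) ∧
      |((lam + 2 : ℤ) : ℝ) ^ s * ((α : ℝ) / (lam : ℝ)) - (u1 : ℝ)| +
        |((lam + 2 : ℤ) : ℝ) ^ s * ((α : ℝ) / (lam : ℝ)) - (u2 : ℝ)| +
        |((lam + 2 : ℤ) : ℝ) ^ s * ((α : ℝ) / (lam : ℝ)) - (u3 : ℝ)| < 1) ∧
    (∃ u1 u2 u3 : ℤ, Odd (u1 + u2 + u3) ∧
      |((lam + 2 : ℤ) : ℝ) ^ m * ((α : ℝ) / (lam : ℝ)) - (u1 : ℝ)| +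
        |((lam + 2 : ℤ) : ℝ) ^ m * ((α : ℝ) / (lam : ℝ)) - (u2 : ℝ)| +
        |((lam + 2 : ℤ) : ℝ) ^ m * ((α : ℝ) / (lam : ℝ)) - (u3 : ℝ)| < 1 ∧
      |((lam + 2 : ℤ) : ℝ) ^ m * ((α : ℝ) / (lam : ℝ)) - (u1 : ℝ)| +
        |((lam + 2 : ℤ) : ℝ) ^ m * ((α : ℝ) / (lam : ℝ)) - (u2 : ℝ)| +
        |((lam + 2 : ℤ) : ℝ) ^ m * ((α : ℝ) / (lam : ℝ)) - (u3 : ℝ)| =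
        3 * |1 - 2 ^ m * ((α : ℝ) / (lam : ℝ))|) :=
  stmt_18_general d α lam (lam + 2) heven hα hlam (.inl (by simp [Int.ModEq])) m hm hlow hhigh
end

section
/- Let d ≥ 7 be an odd integer, set α = d − 2 and λ = (d−1)(d−2) + 1 = d² − 3d + 3, and set l = λ + 2. Then: (a) there is no u ∈ L_odd with |α/λ − u1| + |α/λ − u2| + |α/λ − u3| < 1; and (b) there exists u ∈ L_odd with |l·α/λ − u1| + |l·α/λ − u2| + |l·α/λ − u3| < 1, and the value of this sum is 6α/λ. -/
/-!
Write `t = α / λ`. An odd sum has an odd term; for `0 ≤ t ≤ 1 / 2` an odd integer is at distance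
at least `1 - t` from `t`, and every integer is at distance at least `t`, so two coordinates
already contribute `1` to the taxicab distance. On the other hand `(λ + k) t = α + k t`, so each
coordinate of `(λ + k) (t, t, t)` is within `|k| t` of `α`, and `(α, α, α)` lies in `L_odd` because
`α` is odd. For the Klein curve `λ - 6 α = (d - 7) (d - 2) + 1`, which is positive for `d ≥ 7`.
-/

section IntegerDistance

variable {R : Type*} [CommRing R] [LinearOrder R] [IsStrictOrderedRing R] {t : R}

lemma le_abs_sub_intCast (ht : t ≤ 1 - t) (u : ℤ) : t ≤ |t - u| := by
  obtain hu | hu : u ≤ 0 ∨ 1 ≤ u := by omega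
  · have : (u : R) ≤ 0 := by exact_mod_cast hu
    exact le_abs.2 (.inl (by linarith))
  · have : (1 : R) ≤ u := by exact_mod_cast hu
    exact le_abs.2 (.inr (by linarith))

lemma one_sub_le_abs_sub_intCast_of_odd (ht : 0 ≤ t) {u : ℤ} (hu : Odd u) : 1 - t ≤ |t - u| := by
  obtain hu | hu : u ≤ -1 ∨ 1 ≤ u := by grind
  · have : (u : R) ≤ -1 := by exact_mod_cast hu
    exact le_abs.2 (.inl (by linarith))
  · have : (1 : R) ≤ u := by exact_mod_cast hu
    exact le_abs.2 (.inr (by linarith))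

theorem one_le_sum_abs_sub_intCast_of_odd_sum {ι : Type*} [Fintype ι] [Nontrivial ι]
    (ht₀ : 0 ≤ t) (ht₁ : t ≤ 1 - t) {u : ι → ℤ} (hu : Odd (∑ i, u i)) :
    1 ≤ ∑ i, |t - u i| := by
  obtain ⟨i, hi⟩ : ∃ i, Odd (u i) := by
    by_contra! h
    exact Int.not_even_iff_odd.2 hu (Finset.even_sum _ fun i _ ↦ Int.not_odd_iff_even.1 (h i))
  obtain ⟨j, hij⟩ := exists_ne i
  calc
    1 = (1 - t) + t := by ring
    _ ≤ |t - u i| + |t - u j| :=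
      add_le_add (one_sub_le_abs_sub_intCast_of_odd ht₀ hi) (le_abs_sub_intCast ht₁ (u j))
    _ ≤ ∑ i, |t - u i| :=
      Finset.add_le_sum (f := fun i ↦ |t - u i|) (fun _ _ ↦ abs_nonneg _)
        (Finset.mem_univ i) (Finset.mem_univ j) hij.symm

end IntegerDistance

lemma abs_add_mul_div_sub_self {K : Type*} [Field K] [LinearOrder K] [IsStrictOrderedRing K]
    {a l : K} (ha : 0 ≤ a) (hl : 0 < l) (k : K) : |(l + k) * a / l - a| = |k| * a / l := by
  have : (l + k) * a / l - a = k * a / l := by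
    field_simp
    ring
  rw [this, abs_div, abs_mul, abs_of_nonneg ha, abs_of_pos hl]

theorem stmt_19_general {α : ℤ} {lam k : ℝ} (hα : Odd α) (hα₀ : 0 < α) (hlam : 2 * α ≤ lam)
    (hk : 3 * |k| * α < lam) :
    (¬ ∃ u1 u2 u3 : ℤ, Odd (u1 + u2 + u3) ∧
      |α / lam - u1| + |α / lam - u2| + |α / lam - u3| < 1) ∧
    (∃ u1 u2 u3 : ℤ, Odd (u1 + u2 + u3) ∧
      |(lam + k) * α / lam - u1| + |(lam + k) * α / lam - u2| + |(lam + k) * α / lam - u3| < 1 ∧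
      |(lam + k) * α / lam - u1| + |(lam + k) * α / lam - u2| + |(lam + k) * α / lam - u3| =
        3 * |k| * α / lam) := by
  have hα_pos : (0 : ℝ) < α := by exact_mod_cast hα₀
  have hlam_pos : 0 < lam := by linarith
  constructor
  · rintro ⟨u1, u2, u3, hu, hlt⟩
    have ht : α / lam ≤ 1 / 2 := by rw [div_le_iff₀ hlam_pos]; linarith
    have hge := one_le_sum_abs_sub_intCast_of_odd_sum (u := ![u1, u2, u3])
      (div_pos hα_pos hlam_pos).le (by linarith) (by simpa [Fin.sum_univ_three] using hu)
    exact hlt.not_ge (by simpa [Fin.sum_univ_three] using hge)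
  · have hdist : |(lam + k) * α / lam - α| + |(lam + k) * α / lam - α| +
        |(lam + k) * α / lam - α| = 3 * |k| * α / lam := by
      rw [abs_add_mul_div_sub_self hα_pos.le hlam_pos]
      ring
    exact ⟨α, α, α, (hα.add_odd hα).add_odd hα, hdist ▸ (div_lt_one hlam_pos).2 hk, hdist⟩

lemma six_mul_sub_two_lt {R : Type*} [CommRing R] [LinearOrder R] [IsStrictOrderedRing R] {d : R}
    (hd : 7 ≤ d) : 6 * (d - 2) < (d - 1) * (d - 2) + 1 := by
  have : 0 ≤ (d - 7) * (d - 2) := mul_nonneg (by linarith) (by linarith)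
  linarith

/-- Corollary 4.7(2) for the Klein d-curve, d ≥ 7 odd: with l = λ + 2, Td(t, u) < 1 has no
solution, and Td(l·t, u) < 1 has a solution of value 6α/λ, i.e. Δ_{h,1}(λ + 2) = (6α/λ, 1). -/
theorem stmt_19 (d α lam : ℤ) (hd7 : 7 ≤ d) (hodd : Odd d)
    (hα : α = d - 2) (hlam : lam = (d - 1) * (d - 2) + 1)
    (hlam' : lam = d ^ 2 - 3 * d + 3) :
    (¬ ∃ u1 u2 u3 : ℤ, Odd (u1 + u2 + u3) ∧
      |(α : ℝ) / (lam : ℝ) - (u1 : ℝ)| + |(α : ℝ) / (lam : ℝ) - (u2 : ℝ)| +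
        |(α : ℝ) / (lam : ℝ) - (u3 : ℝ)| < 1) ∧
    (∃ u1 u2 u3 : ℤ, Odd (u1 + u2 + u3) ∧
      |((lam + 2) * α : ℝ) / (lam : ℝ) - (u1 : ℝ)| +
        |((lam + 2) * α : ℝ) / (lam : ℝ) - (u2 : ℝ)| +
        |((lam + 2) * α : ℝ) / (lam : ℝ) - (u3 : ℝ)| < 1 ∧
      |((lam + 2) * α : ℝ) / (lam : ℝ) - (u1 : ℝ)| +
        |((lam + 2) * α : ℝ) / (lam : ℝ) - (u2 : ℝ)| +
        |((lam + 2) * α : ℝ) / (lam : ℝ) - (u3 : ℝ)| = (6 * α : ℝ) / (lam : ℝ)) := by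
  have hα_odd : Odd α := hα ▸ hodd.sub_even even_two
  have h6 : 6 * α < lam := by
    rw [hα, hlam]
    exact six_mul_sub_two_lt hd7
  have habs : 3 * |(2 : ℝ)| = 6 := by norm_num
  exact habs ▸ stmt_19_general hα_odd (by omega)
    (by exact_mod_cast (by omega : 2 * α ≤ lam)) (by rw [habs]; exact_mod_cast h6)
end
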